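/- Let M be a compact connected boundaryless topological manifold of dimension n ≥ 3 with a compatible metric and let f : M → M be an expansive homeomorphism such that the closure of Per_H^{n−1} equals M. Then the set 𝒮 of singularities of f (the points of M admitting no local product structure) has no isolated points. -/

import Mathlib

open Metric Set

variable {M : Type*} [MetricSpace M]

/-- Iterates of a homeomorphism, indexed by `ℤ`. -/
def iterZ (f : M ≃ₜ M) (k : ℤ) (x : M) : M := (f.toEquiv ^ k) x

/-- `f` is expansive with expansivity constant `α`. -/
def IsExpansive (f : M ≃ₜ M) (α : ℝ) : Prop :=
  ∀ x y : M, x ≠ y → ∃ k : ℤ, α < dist (iterZ f k x) (iterZ f k y)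

/-- Stable set of `x`. -/
def Ws (f : M ≃ₜ M) (x : M) : Set M :=
  {y | Filter.Tendsto (fun k : ℤ => dist (iterZ f k x) (iterZ f k y)) Filter.atTop (nhds 0)}

/-- Unstable set of `x`. -/
def Wu (f : M ≃ₜ M) (x : M) : Set M :=
  {y | Filter.Tendsto (fun k : ℤ => dist (iterZ f k x) (iterZ f k y)) Filter.atBot (nhds 0)}

/-- Local (`ε`-local) stable set of `x`. -/
def WsLoc (f : M ≃ₜ M) (ε : ℝ) (x : M) : Set M :=
  {y | ∀ k : ℤ, 0 ≤ k → dist (iterZ f k x) (iterZ f k y) ≤ ε}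

/-- Local (`ε`-local) unstable set of `x`. -/
def WuLoc (f : M ≃ₜ M) (ε : ℝ) (x : M) : Set M :=
  {y | ∀ k : ℤ, k ≤ 0 → dist (iterZ f k x) (iterZ f k y) ≤ ε}

/-- The model space `ℝ^r × ℝ^{n-r}`. -/
abbrev ModelSp (n r : ℕ) := (Fin r → ℝ) × (Fin (n - r) → ℝ)

/-- The model hyperbolic linear map `L(a,b) = (a/2, 2b)`. -/
noncomputable def modelL (n r : ℕ) : ModelSp n r → ModelSp n r :=
  fun q => (fun i => q.1 i / 2, fun i => 2 * q.2 i)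

/-- Topologically hyperbolic periodic points of index `r` (`Per_H^r`). -/
def PerHr (f : M ≃ₜ M) (n r : ℕ) : Set M :=
  {p | ∃ l : ℕ, 1 ≤ l ∧ (f.toEquiv ^ l) p = p ∧
    ∃ (U : Set M) (V : Set (ModelSp n r)) (h : U ≃ₜ V),
      IsOpen U ∧ IsOpen V ∧ (0 : ModelSp n r) ∈ V ∧
      ∃ hp : p ∈ U, ((h ⟨p, hp⟩ : V) : ModelSp n r) = 0 ∧
        ∀ z : M, ∀ hz : z ∈ U, ∀ hz' : (f.toEquiv ^ l) z ∈ U,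
          ((h ⟨(f.toEquiv ^ l) z, hz'⟩ : V) : ModelSp n r) = modelL n r (h ⟨z, hz⟩)}

/-- All topologically hyperbolic periodic points (`Per_H`). -/
def PerH (f : M ≃ₜ M) (n : ℕ) : Set M := ⋃ r ∈ Finset.range (n + 1), PerHr f n r

/-- `p` admits a local product structure. -/
def AdmitsLPS (f : M ≃ₜ M) (n : ℕ) (p : M) : Prop :=
  ∃ (k : ℕ) (h : (Fin k → ℝ) × (Fin (n - k) → ℝ) → M) (ε : ℝ),
    0 < ε ∧ Topology.IsEmbedding h ∧ p ∈ Set.range h ∧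
    ∀ x : Fin k → ℝ, ∀ y : Fin (n - k) → ℝ,
      h '' ({x} ×ˢ univ) = WsLoc f ε (h (x, y)) ∩ Set.range h ∧
      h '' (univ ×ˢ {y}) = WuLoc f ε (h (x, y)) ∩ Set.range h

lemma ID_weights (n : ℕ) (c : ℝ) (hc : 0 < c) : ∃ (w t : ℕ → ℝ), (∀ j, 0 < t j ∧ t j ≤ c) ∧
    (∑ j ∈ Finset.range (n+1), w j = 1) ∧
    ∀ A : Matrix (Fin n) (Fin n) ℝ,
      (1 + A).det = ∑ j ∈ Finset.range (n+1), w j * (1 + t j • A).det := by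
  classical
  set t : ℕ → ℝ := fun j => c / (j + 1) with ht
  have hinj : Set.InjOn t (Finset.range (n+1) : Finset ℕ) := by
    intro i _ j _ hij
    simp only [ht] at hij
    have h1 : (0:ℝ) < i + 1 := by positivity
    have h2 : (0:ℝ) < j + 1 := by positivity
    field_simp at hij
    have : (i:ℝ) = j := by linarith
    exact_mod_cast this
  refine ⟨fun j => (Lagrange.basis (Finset.range (n+1)) t j).eval 1, t, ?_, ?_, ?_⟩
  · intro j
    have h1 : (0:ℝ) < j + 1 := by positivity
    refine ⟨by simp only [ht]; positivity, ?_⟩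
    simp only [ht]
    rw [div_le_iff₀ h1]
    nlinarith [Nat.cast_nonneg (α := ℝ) j]
  · have := Lagrange.sum_basis hinj (by simp)
    have h2 := congrArg (Polynomial.eval 1) this
    rw [Polynomial.eval_finsetSum] at h2
    simpa using h2
  · intro A
    set P : Polynomial ℝ := Matrix.det ((Polynomial.X : Polynomial ℝ) • A.map Polynomial.C + (1 : Matrix (Fin n) (Fin n) ℝ).map Polynomial.C) with hP
    have hdeg : P.degree < (Finset.range (n+1)).card := by
      have := Polynomial.natDegree_det_X_add_C_le A (1 : Matrix (Fin n) (Fin n) ℝ)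
      refine lt_of_le_of_lt Polynomial.degree_le_natDegree ?_
      rw [Finset.card_range]
      rw [Fintype.card_fin] at this
      exact_mod_cast Nat.lt_succ_of_le this
    have hev : ∀ s : ℝ, P.eval s = (1 + s • A).det := by
      intro s
      rw [hP, ← Polynomial.coe_evalRingHom, RingHom.map_det]
      congr 1
      ext i j
      simp [Matrix.one_apply]
      split_ifs <;> simp <;> ring
    have h1 := Lagrange.eq_interpolate hinj hdeg
    have h2 := congrArg (Polynomial.eval 1) h1
    rw [Lagrange.interpolate_apply, Polynomial.eval_finsetSum] at h2
    rw [hev 1, one_smul] at h2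
    rw [h2]
    refine Finset.sum_congr rfl fun j _ => ?_
    simp [hev, mul_comm]

lemma ID_weights' (n : ℕ) (c : ℝ) (hc : 0 < c) : ∃ (w t : ℕ → ℝ), (∀ j, 0 < t j ∧ t j ≤ c) ∧
    (∑ j ∈ Finset.range (n+1), w j = 1) ∧
    ∀ A : EuclideanSpace ℝ (Fin n) →L[ℝ] EuclideanSpace ℝ (Fin n),
      (ContinuousLinearMap.id ℝ _ + A).det = ∑ j ∈ Finset.range (n+1), w j *
        (ContinuousLinearMap.id ℝ _ + t j • A).det := by
  obtain ⟨w, t, h1, h2, h3⟩ := ID_weights n c hc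
  refine ⟨w, t, h1, h2, fun A => ?_⟩
  let b := (EuclideanSpace.basisFun (Fin n) ℝ).toBasis
  have key : ∀ s : ℝ, (ContinuousLinearMap.id ℝ _ + s • A).det =
      (1 + s • LinearMap.toMatrix b b (A : EuclideanSpace ℝ (Fin n) →ₗ[ℝ] _)).det := by
    intro s
    rw [ContinuousLinearMap.det, ← LinearMap.det_toMatrix b]
    congr 1
    simp
  have h4 := h3 (LinearMap.toMatrix b b (A : EuclideanSpace ℝ (Fin n) →ₗ[ℝ] _))
  have h5 := key 1
  rw [one_smul, one_smul] at h5
  rw [h5, h4]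
  exact Finset.sum_congr rfl fun j _ => by rw [key]

lemma ID_det_pos {n : ℕ} (A : EuclideanSpace ℝ (Fin n) →L[ℝ] EuclideanSpace ℝ (Fin n))
    (hA : ‖A‖ < 1) : 0 < (ContinuousLinearMap.id ℝ (EuclideanSpace ℝ (Fin n)) + A).det := by
  have hc : Continuous fun s : ℝ => (ContinuousLinearMap.id ℝ (EuclideanSpace ℝ (Fin n)) + s • A).det := by
    have : Continuous fun s : ℝ => (ContinuousLinearMap.id ℝ (EuclideanSpace ℝ (Fin n)) + s • A) := by fun_prop
    exact ContinuousLinearMap.continuous_det.comp this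
  have hne : ∀ s ∈ Icc (0:ℝ) 1, (ContinuousLinearMap.id ℝ (EuclideanSpace ℝ (Fin n)) + s • A).det ≠ 0 := by
    intro s hs h0
    have hinj : Function.Injective (ContinuousLinearMap.id ℝ (EuclideanSpace ℝ (Fin n)) + s • A) := by
      rw [injective_iff_map_eq_zero]
      intro x hx
      have hx' : x = - (s • A x) := by
        simp at hx
        exact eq_neg_of_add_eq_zero_left hx
      by_contra hx0
      have hpos : 0 < ‖x‖ := norm_pos_iff.mpr hx0
      have : ‖x‖ ≤ ‖A‖ * ‖x‖ := by
        calc ‖x‖ = ‖s • A x‖ := by conv_lhs => rw [hx', norm_neg]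
          _ = |s| * ‖A x‖ := by rw [norm_smul, Real.norm_eq_abs]
          _ ≤ 1 * ‖A x‖ := by gcongr; rw [abs_le]; constructor <;> linarith [hs.1, hs.2]
          _ ≤ ‖A‖ * ‖x‖ := by rw [one_mul]; exact A.le_opNorm x
      nlinarith
    have := LinearMap.bot_lt_ker_of_det_eq_zero (f := ((ContinuousLinearMap.id ℝ (EuclideanSpace ℝ (Fin n)) + s • A : _ →L[ℝ] _) : EuclideanSpace ℝ (Fin n) →ₗ[ℝ] _)) h0
    rw [LinearMap.ker_eq_bot.mpr hinj] at this
    exact lt_irrefl _ this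
  by_contra hneg
  push Not at hneg
  have h0 : (ContinuousLinearMap.id ℝ (EuclideanSpace ℝ (Fin n)) + (0:ℝ) • A).det = 1 := by
    simp [ContinuousLinearMap.det]
  have h1 : (ContinuousLinearMap.id ℝ (EuclideanSpace ℝ (Fin n)) + (1:ℝ) • A).det ≤ 0 := by simpa using hneg
  have := intermediate_value_Icc' (zero_le_one (α := ℝ)) hc.continuousOn
  obtain ⟨s, hs, hs0⟩ := this ⟨h1, by rw [h0]; norm_num⟩
  exact hne s hs hs0

lemma ID_lip {n : ℕ} (h : EuclideanSpace ℝ (Fin n) → EuclideanSpace ℝ (Fin n)) (K : NNReal)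
    (hl : LipschitzOnWith K h (closedBall 0 2)) (h0 : ∀ x, ‖x‖ = 2 → h x = 0) :
    LipschitzWith K (fun x => if ‖x‖ ≤ 2 then h x else 0) := by
  have cross : ∀ x y : EuclideanSpace ℝ (Fin n), ‖x‖ ≤ 2 → ¬ ‖y‖ ≤ 2 → dist (h x) 0 ≤ K * dist x y := by
    intro x y hx hy
    have hc : ContinuousOn (fun c : ℝ => ‖AffineMap.lineMap x y c‖) (Icc 0 1) := by
      apply Continuous.continuousOn
      exact continuous_norm.comp AffineMap.lineMap_continuous
    obtain ⟨c, hc, hc2⟩ := intermediate_value_Icc (zero_le_one (α := ℝ)) hc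
      (show (2:ℝ) ∈ _ by simp; exact ⟨hx, le_of_lt (not_le.mp hy)⟩)
    simp only at hc2
    rw [← h0 _ hc2]
    refine (hl.dist_le_mul x (by simpa using hx) _ (by simp [hc2])).trans ?_
    gcongr
    rw [dist_left_lineMap, Real.norm_eq_abs, abs_of_nonneg hc.1]
    nlinarith [hc.2, dist_nonneg (x := x) (y := y)]
  apply LipschitzWith.of_dist_le_mul
  intro x y
  by_cases hx : ‖x‖ ≤ 2 <;> by_cases hy : ‖y‖ ≤ 2
  · simp only [hx, hy, if_true]
    exact hl.dist_le_mul x (by simpa using hx) _ (by simpa using hy)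
  · simp only [hx, hy, if_true, if_false]
    exact cross x y hx hy
  · simp only [hx, hy, if_true, if_false]
    rw [dist_comm, dist_comm x y]
    exact cross y x hy hx
  · simp only [hx, hy, if_false, dist_self]
    positivity

open MeasureTheory in
lemma ID_vol {n : ℕ} (h : EuclideanSpace ℝ (Fin n) → EuclideanSpace ℝ (Fin n))
    (hC : ContDiff ℝ 1 h) (K : NNReal)
    (hl : LipschitzOnWith K h (closedBall 0 2)) (h0 : ∀ x, ‖x‖ = 2 → h x = 0) (t : ℝ) (ht : 0 < t)
    (htK : t * K < 1) :
    ∫ x in ball (0 : EuclideanSpace ℝ (Fin n)) 2, (ContinuousLinearMap.id ℝ _ + t • fderiv ℝ h x).det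
      = (volume (ball (0 : EuclideanSpace ℝ (Fin n)) 2)).toReal := by
  set h' : EuclideanSpace ℝ (Fin n) → EuclideanSpace ℝ (Fin n) := fun x => if ‖x‖ ≤ 2 then h x else 0 with hh'
  have hl' := ID_lip h K hl h0
  rw [← hh'] at hl'
  set F : EuclideanSpace ℝ (Fin n) → EuclideanSpace ℝ (Fin n) := fun x => x + t • h' x with hF
  have happ : ApproximatesLinearOn F ((ContinuousLinearEquiv.refl ℝ (EuclideanSpace ℝ (Fin n)) : EuclideanSpace ℝ (Fin n) ≃L[ℝ] EuclideanSpace ℝ (Fin n)) : EuclideanSpace ℝ (Fin n) →L[ℝ] EuclideanSpace ℝ (Fin n)) univ (Real.toNNReal t * K) := by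
    intro x _ y _
    have : F x - F y - ((ContinuousLinearEquiv.refl ℝ (EuclideanSpace ℝ (Fin n)) : EuclideanSpace ℝ (Fin n) ≃L[ℝ] EuclideanSpace ℝ (Fin n)) : EuclideanSpace ℝ (Fin n) →L[ℝ] EuclideanSpace ℝ (Fin n)) (x - y) = t • (h' x - h' y) := by
      simp [hF, smul_sub]; abel
    rw [this, norm_smul, Real.norm_eq_abs, abs_of_pos ht]
    have := hl'.dist_le_mul x y
    rw [dist_eq_norm, dist_eq_norm] at this
    rw [NNReal.coe_mul, Real.coe_toNNReal t ht.le, mul_assoc]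
    exact mul_le_mul_of_nonneg_left this ht.le
  have hFl : LipschitzWith (Real.toNNReal t * K) (fun x => t • h' x) := by
    apply LipschitzWith.of_dist_le_mul
    intro x y
    rw [dist_smul₀, Real.norm_eq_abs, abs_of_pos ht]
    rw [NNReal.coe_mul, Real.coe_toNNReal t ht.le, mul_assoc]
    exact mul_le_mul_of_nonneg_left (hl'.dist_le_mul x y) ht.le
  have hinj : Function.Injective F := by
    intro x y hxy
    have h1 := hFl.dist_le_mul x y
    by_contra hne
    have hd := dist_pos.mpr hne
    have h2 : dist (t • h' x) (t • h' y) = dist x y := by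
      have : x - y = -(t • h' x - t • h' y) := by
        simp only [hF] at hxy
        have : x - y = t • h' y - t • h' x := by
          rw [sub_eq_sub_iff_add_eq_add, hxy, add_comm]
        rw [this]; abel
      rw [dist_eq_norm, dist_eq_norm, this, norm_neg]
    rw [h2] at h1
    rw [NNReal.coe_mul, Real.coe_toNNReal t ht.le] at h1
    have : t * K * dist x y < 1 * dist x y := by gcongr
    linarith
  have hsurj : Function.Surjective F := by
    apply happ.surjective
    by_cases hs : Subsingleton (EuclideanSpace ℝ (Fin n))
    · exact Or.inl hs
    · right
      have : Nontrivial (EuclideanSpace ℝ (Fin n)) := not_subsingleton_iff_nontrivial.mp hs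
      have h1 : ‖(((ContinuousLinearEquiv.refl ℝ (EuclideanSpace ℝ (Fin n))).symm : EuclideanSpace ℝ (Fin n) ≃L[ℝ] EuclideanSpace ℝ (Fin n)) : EuclideanSpace ℝ (Fin n) →L[ℝ] EuclideanSpace ℝ (Fin n))‖₊ = 1 := by
        apply NNReal.eq
        simpa using ContinuousLinearMap.norm_id (𝕜 := ℝ) (E := EuclideanSpace ℝ (Fin n))
      rw [h1]
      rw [inv_one]
      rw [← NNReal.coe_lt_coe, NNReal.coe_mul, Real.coe_toNNReal t ht.le]
      exact htK
  have hout : ∀ x, 2 ≤ ‖x‖ → F x = x := by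
    intro x hx
    simp only [hF, hh']
    split_ifs with h2
    · rw [h0 x (le_antisymm h2 hx)]; simp
    · simp
  have himg : F '' ball 0 2 = ball 0 2 := by
    ext y
    simp only [mem_image, mem_ball_zero_iff]
    constructor
    · rintro ⟨x, hx, rfl⟩
      by_contra hcon
      have := hout (F x) (not_lt.mp hcon)
      have := hinj this
      rw [this] at hcon
      exact hcon hx
    · intro hy
      obtain ⟨x, rfl⟩ := hsurj y
      refine ⟨x, ?_, rfl⟩
      by_contra hcon
      rw [hout x (not_lt.mp hcon)] at hy
      exact hcon hy
  have hder : ∀ x ∈ ball (0 : EuclideanSpace ℝ (Fin n)) 2, HasFDerivWithinAt F (ContinuousLinearMap.id ℝ _ + t • fderiv ℝ h x) (ball 0 2) x := by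
    intro x hx
    have hd : HasFDerivAt h (fderiv ℝ h x) x := (hC.differentiable (by norm_num) x).hasFDerivAt
    have : HasFDerivAt (fun x => x + t • h x) (ContinuousLinearMap.id ℝ _ + t • fderiv ℝ h x) x :=
      (hasFDerivAt_id x).add (hd.const_smul t)
    refine (this.hasFDerivWithinAt).congr ?_ ?_
    · intro y hy
      simp only [mem_ball_zero_iff] at hy
      simp [hF, hh', hy.le]
    · simp only [mem_ball_zero_iff] at hx
      simp [hF, hh', hx.le]
  have hmain := integral_image_eq_integral_abs_det_fderiv_smul volume measurableSet_ball hder (hinj.injOn) (fun _ => (1:ℝ))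
  rw [himg] at hmain
  have hlhs : ∫ _ in ball (0 : EuclideanSpace ℝ (Fin n)) 2, (1:ℝ) = (volume (ball (0 : EuclideanSpace ℝ (Fin n)) 2)).toReal := by
    simp [Measure.real]
  rw [hlhs] at hmain
  rw [hmain]
  refine setIntegral_congr_fun measurableSet_ball fun x hx => ?_
  simp only [smul_eq_mul, mul_one]
  rw [abs_of_pos]
  apply ID_det_pos
  rw [norm_smul, Real.norm_eq_abs, abs_of_pos ht]
  have : ‖fderiv ℝ h x‖ ≤ K := norm_fderiv_le_of_lipschitzOn ℝ (Filter.mem_of_superset (isOpen_ball.mem_nhds hx) ball_subset_closedBall) hl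
  calc t * ‖fderiv ℝ h x‖ ≤ t * K := by gcongr
    _ < 1 := htK

open MeasureTheory in
lemma ID_noretr {n : ℕ} (g : EuclideanSpace ℝ (Fin n) → EuclideanSpace ℝ (Fin n))
    (hC : ContDiff ℝ 1 g) (h0 : ∀ x, ‖x‖ = 2 → g x = x) (h2 : ∀ x, ‖x‖ ≤ 2 → ‖g x‖ = 2) : False := by
  set h : EuclideanSpace ℝ (Fin n) → EuclideanSpace ℝ (Fin n) := fun x => g x - x with hh
  have hhC : ContDiff ℝ 1 h := hC.sub contDiff_id
  have hfc : Continuous (fderiv ℝ h) := hhC.continuous_fderiv (by norm_num)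
  obtain ⟨K, hK⟩ : ∃ K : NNReal, LipschitzOnWith K h (closedBall 0 2) := by
    obtain ⟨C, hCb⟩ := (isCompact_closedBall (0 : EuclideanSpace ℝ (Fin n)) 2).exists_bound_of_continuousOn hfc.continuousOn
    refine ⟨⟨max C 0, le_max_right _ _⟩, ?_⟩
    refine Convex.lipschitzOnWith_of_nnnorm_fderiv_le (𝕜 := ℝ) ?_ ?_ (convex_closedBall _ _)
    · intro x _; exact hhC.differentiable (by norm_num) x
    · intro x hx
      exact (hCb x hx).trans (le_max_left _ _)
  obtain ⟨w, t, ht, hw, hdet⟩ := ID_weights' n (1 / (K + 1)) (by positivity)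
  have hvol := fun j => ID_vol h hhC K hK (fun x hx => by simp [hh, h0 x hx]) (t j) (ht j).1 (by
    have h1 := (ht j).2
    calc t j * K ≤ 1 / (K + 1) * K := by gcongr
      _ < 1 := by
        rw [one_div, inv_mul_lt_iff₀ (by positivity)]; linarith)
  have hIntg : ∀ j, IntegrableOn (fun x => (ContinuousLinearMap.id ℝ _ + t j • fderiv ℝ h x).det) (ball (0 : EuclideanSpace ℝ (Fin n)) 2) := by
    intro j
    have : Continuous (fun x => (ContinuousLinearMap.id ℝ _ + t j • fderiv ℝ h x).det) := by
      refine ContinuousLinearMap.continuous_det.comp ?_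
      fun_prop
    exact (this.continuousOn.integrableOn_compact (isCompact_closedBall 0 2)).mono_set ball_subset_closedBall
  have hsum : ∫ x in ball (0 : EuclideanSpace ℝ (Fin n)) 2, (ContinuousLinearMap.id ℝ _ + fderiv ℝ h x).det
      = (volume (ball (0 : EuclideanSpace ℝ (Fin n)) 2)).toReal := by
    rw [integral_congr_ae (Filter.Eventually.of_forall fun x => hdet (fderiv ℝ h x))]
    rw [integral_finsetSum _ (fun j _ => (hIntg j).const_mul _)]
    simp_rw [integral_const_mul, hvol]
    rw [← Finset.sum_mul, hw, one_mul]
  have hzero : ∀ x ∈ ball (0 : EuclideanSpace ℝ (Fin n)) 2, (ContinuousLinearMap.id ℝ _ + fderiv ℝ h x).det = 0 := by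
    intro x hx
    have hgd : HasFDerivAt g (fderiv ℝ g x) x := (hC.differentiable (by norm_num) x).hasFDerivAt
    have e1 : ContinuousLinearMap.id ℝ _ + fderiv ℝ h x = fderiv ℝ g x := by
      have : fderiv ℝ h x = fderiv ℝ g x - ContinuousLinearMap.id ℝ _ := (hgd.sub (hasFDerivAt_id x)).fderiv
      rw [this]; abel
    rw [e1]
    by_contra hne
    have hu : IsUnit (LinearMap.det (fderiv ℝ g x : EuclideanSpace ℝ (Fin n) →ₗ[ℝ] _)) := isUnit_iff_ne_zero.mpr hne
    have hsurj : Function.Surjective (fderiv ℝ g x) := by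
      exact (LinearEquiv.ofIsUnitDet (f := (fderiv ℝ g x : EuclideanSpace ℝ (Fin n) →ₗ[ℝ] _)) (v := (EuclideanSpace.basisFun (Fin n) ℝ).toBasis) (v' := (EuclideanSpace.basisFun (Fin n) ℝ).toBasis) (by rw [LinearMap.det_toMatrix]; exact hu)).surjective
    obtain ⟨v, hv⟩ := hsurj (g x)
    have hn : HasFDerivAt (fun y => inner ℝ (g y) (g y)) (0 : EuclideanSpace ℝ (Fin n) →L[ℝ] ℝ) x := by
      have : (fun y => inner ℝ (g y) (g y)) =ᶠ[nhds x] fun _ => (4:ℝ) := by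
        filter_upwards [isOpen_ball.mem_nhds hx] with y hy
        simp only [mem_ball_zero_iff] at hy
        rw [real_inner_self_eq_norm_sq, h2 y hy.le]; norm_num
      exact (hasFDerivAt_const (4:ℝ) x).congr_of_eventuallyEq this
    have hn2 := hgd.inner ℝ hgd
    have := congrArg (fun L => L v) (hn2.unique hn)
    simp [hv] at this
    have h3 := h2 x (by simpa using (mem_ball_zero_iff.mp hx).le)
    rw [this] at h3
    simp at h3
  rw [setIntegral_congr_fun measurableSet_ball hzero] at hsum
  simp only [integral_zero] at hsum
  have : 0 < volume (ball (0 : EuclideanSpace ℝ (Fin n)) 2) := measure_ball_pos _ _ (by norm_num)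
  exact (ENNReal.toReal_pos this.ne' measure_ball_lt_top.ne).ne hsum

lemma ID_NR {n : ℕ} (ψ : EuclideanSpace ℝ (Fin n) → EuclideanSpace ℝ (Fin n))
    (hψ : ContinuousOn ψ (closedBall 0 2)) (h1 : ∀ x, ‖x‖ ≤ 2 → ‖ψ x - x‖ < 1)
    (h0 : ∀ x, ‖x‖ ≤ 2 → ψ x ≠ 0) : False := by
  obtain ⟨Ψ, hΨ⟩ := ContinuousMap.exists_restrict_eq (isClosed_closedBall (x := (0 : EuclideanSpace ℝ (Fin n))) (ε := 2)) ⟨_, hψ.domRestrict⟩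
  have hΨe : ∀ x, ‖x‖ ≤ 2 → Ψ x = ψ x := by
    intro x hx
    have := congrArg (fun g => g ⟨x, by simpa using hx⟩) hΨ
    simpa using this
  have h1' : ∀ x, ‖x‖ ≤ 2 → ‖Ψ x - x‖ < 1 := fun x hx => by rw [hΨe x hx]; exact h1 x hx
  have h0' : ∀ x, ‖x‖ ≤ 2 → Ψ x ≠ 0 := fun x hx => by rw [hΨe x hx]; exact h0 x hx
  set χ : EuclideanSpace ℝ (Fin n) → ℝ := fun x => max 0 (min 1 (3 - 2 * ‖x‖)) with hχ
  have hχc : Continuous χ := by fun_prop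
  have hχ1 : ∀ x, ‖x‖ ≤ 1 → χ x = 1 := by
    intro x hx
    simp only [hχ]
    rw [min_eq_left (by linarith), max_eq_right (by norm_num)]
  have hχ2 : ∀ x, 3 / 2 ≤ ‖x‖ → χ x = 0 := by
    intro x hx
    simp only [hχ]
    exact max_eq_left ((min_le_right _ _).trans (by linarith))
  have hχn : ∀ x, 0 ≤ χ x := fun x => le_max_left _ _
  have hχl : ∀ x, χ x ≤ 1 := fun x => max_le zero_le_one (min_le_left _ _)
  set F : EuclideanSpace ℝ (Fin n) → EuclideanSpace ℝ (Fin n) := fun x => x + χ x • (Ψ x - x) with hF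
  have hFc : Continuous F := by
    have := Ψ.continuous
    fun_prop
  have hFx : ∀ x, 3 / 2 ≤ ‖x‖ → F x = x := by
    intro x hx
    simp [hF, hχ2 x hx]
  have hF0 : ∀ x, F x ≠ 0 := by
    intro x hx
    rcases le_total ‖x‖ 1 with h | h
    · apply h0' x (by linarith)
      simpa [hF, hχ1 x h] using hx
    · rcases le_total ‖x‖ 2 with h' | h'
      · have e : x = - (χ x • (Ψ x - x)) := eq_neg_of_add_eq_zero_left hx
        have : ‖x‖ < 1 := by
          calc ‖x‖ = ‖χ x • (Ψ x - x)‖ := by conv_lhs => rw [e, norm_neg]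
            _ = χ x * ‖Ψ x - x‖ := by rw [norm_smul, Real.norm_eq_abs, abs_of_nonneg (hχn x)]
            _ ≤ 1 * ‖Ψ x - x‖ := by gcongr; exact hχl x
            _ < 1 := by rw [one_mul]; exact h1' x h'
        linarith
      · rw [hFx x (by linarith)] at hx
        rw [hx] at h
        norm_num at h
  obtain ⟨G, hGC, hGd, hGe, -⟩ := hFc.exists_contDiff_approx_and_eqOn 1 (ε := fun x => ‖F x‖) (by fun_prop)
    (fun x => norm_pos_iff.mpr (hF0 x)) (S := {x | 2 ≤ ‖x‖}) (U := {x | 3 / 2 < ‖x‖})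
    (isClosed_le continuous_const continuous_norm)
    ((isOpen_lt continuous_const continuous_norm).mem_nhdsSet.mpr (fun x hx => by
      simp only [mem_ofPred_eq] at hx ⊢; linarith))
    (contDiffOn_id.congr (fun x hx => hFx x (le_of_lt hx)))
  have hG0 : ∀ x, G x ≠ 0 := by
    intro x hx
    have := hGd x
    rw [hx, dist_zero_left] at this
    exact lt_irrefl _ this
  refine ID_noretr (fun x => (2 * ‖G x‖⁻¹) • G x) ?_ ?_ ?_
  · have : ContDiff ℝ 1 (fun x => ‖G x‖) := hGC.norm ℝ hG0
    have h3 : ContDiff ℝ 1 (fun x => ‖G x‖⁻¹) := this.inv (fun x => norm_ne_zero_iff.mpr (hG0 x))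
    exact (contDiff_const.mul h3).smul hGC
  · intro x hx
    have : G x = x := by
      rw [hGe (show 2 ≤ ‖x‖ from hx.ge), hFx x (by linarith)]
    simp only [this, hx]
    norm_num
  · intro x _
    have := norm_pos_iff.mpr (hG0 x)
    rw [norm_smul, Real.norm_eq_abs, abs_of_pos (by positivity)]
    field_simp

open MeasureTheory in
lemma ID_core {n : ℕ} (f : EuclideanSpace ℝ (Fin n) → EuclideanSpace ℝ (Fin n))
    (hf : ContinuousOn f (closedBall 0 2)) (hi : InjOn f (closedBall 0 2)) :
    f 0 ∈ interior (f '' closedBall 0 2) := by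
  by_contra hcon
  set B := closedBall (0 : EuclideanSpace ℝ (Fin n)) 2 with hB
  have hBc : IsCompact B := isCompact_closedBall _ _
  have h0B : (0 : EuclideanSpace ℝ (Fin n)) ∈ B := by simp [hB]
  have : CompactSpace B := isCompact_iff_compactSpace.mp hBc
  have he : Topology.IsClosedEmbedding (fun x : B => f x) :=
    Continuous.isClosedEmbedding hf.domRestrict (fun x y h => Subtype.ext (hi x.2 y.2 h))
  obtain ⟨G, hG⟩ := ContinuousMap.exists_extension' he (⟨fun x : B => (x : EuclideanSpace ℝ (Fin n)), continuous_subtype_val⟩ : C(B, EuclideanSpace ℝ (Fin n)))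
  have hGf : ∀ x ∈ B, G (f x) = x := fun x hx => congrFun hG ⟨x, hx⟩
  have hGc : ContinuousAt G (f 0) := G.continuous.continuousAt
  obtain ⟨ε', hε', hGε⟩ := Metric.continuousAt_iff.mp hGc (1/4) (by norm_num)
  set ε := ε' / 3 with hε
  have hεp : 0 < ε := by positivity
  have hGs : ∀ y, ‖y - f 0‖ < 3 * ε → ‖G y‖ < 1 / 4 := by
    intro y hy
    have := hGε (x := y) (by rw [dist_eq_norm]; linarith)
    rwa [hGf 0 h0B, dist_zero_right] at this
  obtain ⟨c, hc, hcd⟩ : ∃ c, c ∉ f '' B ∧ dist c (f 0) < ε := by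
    rw [mem_interior_iff_mem_nhds, Metric.mem_nhds_iff] at hcon
    push Not at hcon
    have := hcon ε hεp
    rw [not_subset] at this
    obtain ⟨c, h1, h2⟩ := this
    exact ⟨c, h2, h1⟩
  have hKc : IsCompact (f '' B) := hBc.image_of_continuousOn hf
  set S1 := f '' B ∩ {y | ε ≤ ‖y - c‖} with hS1
  have hS1c : IsCompact S1 := hKc.inter_right (isClosed_le continuous_const (by fun_prop))
  have hf0 : f 0 ∉ S1 := by
    rintro ⟨_, h⟩
    simp only [mem_ofPred_eq] at h
    rw [dist_comm, dist_eq_norm] at hcd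
    linarith
  have hGS1 : ∀ y ∈ S1, G y ≠ 0 := by
    rintro y hy h0
    obtain ⟨⟨x, hx, rfl⟩, h2⟩ := hy
    rw [hGf x hx] at h0
    subst h0
    exact hf0 ⟨⟨_, hx, rfl⟩, h2⟩
  obtain ⟨m, hm, hmS⟩ : ∃ m > 0, ∀ y ∈ S1, m ≤ ‖G y‖ := by
    rcases S1.eq_empty_or_nonempty with h | h
    · exact ⟨1, one_pos, by simp [h]⟩
    · obtain ⟨y, hy, hmin⟩ := hS1c.exists_isMinOn h (f := fun y => ‖G y‖) (by fun_prop)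
      exact ⟨‖G y‖, norm_pos_iff.mpr (hGS1 y hy), fun z hz => hmin hz⟩
  set η := min (m / 4) (1 / 4) with hη
  have hηp : 0 < η := by positivity
  obtain ⟨P, hPC, hPd, -⟩ := G.continuous.exists_contDiff_approx 1 (ε := fun _ => η) continuous_const (fun _ => hηp)
  have hnull : volume (P '' sphere c ε) = 0 := by
    apply addHaar_image_eq_zero_of_differentiableOn_of_addHaar_eq_zero volume
      (hPC.differentiable (by norm_num)).differentiableOn
    rw [Measure.addHaar_sphere_of_ne_zero _ _ hεp.ne']
  obtain ⟨a, ha, hPa⟩ : ∃ a, ‖a‖ < η ∧ a ∉ P '' sphere c ε := by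
    by_contra hno
    push Not at hno
    have hsub : ball (0 : EuclideanSpace ℝ (Fin n)) η ⊆ P '' sphere c ε := fun a ha => hno a (by simpa using ha)
    have h1 := measure_mono_null hsub hnull
    exact (measure_ball_pos volume (0 : EuclideanSpace ℝ (Fin n)) hηp).ne' h1
  set Φ : EuclideanSpace ℝ (Fin n) → EuclideanSpace ℝ (Fin n) := fun y => c + (max ε ‖y - c‖ / ‖y - c‖) • (y - c) with hΦ
  have hPG : ∀ y, ‖P y - a - G y‖ < 2 * η := by
    intro y
    have h1 := hPd y
    rw [dist_eq_norm] at h1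
    calc ‖P y - a - G y‖ = ‖(P y - G y) - a‖ := by congr 1; abel
      _ ≤ ‖P y - G y‖ + ‖a‖ := norm_sub_le _ _
      _ < 2 * η := by linarith
  have hne : ∀ x ∈ B, f x - c ≠ 0 := by
    intro x hx h
    rw [sub_eq_zero] at h
    exact hc ⟨x, hx, h⟩
  have hη1 : η ≤ m / 4 := min_le_left _ _
  have hη2 : η ≤ 1 / 4 := min_le_right _ _
  have far : ∀ x ∈ B, ε ≤ ‖f x - c‖ → Φ (f x) = f x := by
    intro x hx h
    have := norm_pos_iff.mpr (hne x hx)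
    simp only [hΦ]
    rw [max_eq_right h, div_self this.ne', one_smul]; abel
  have near : ∀ x ∈ B, ‖f x - c‖ ≤ ε → ‖Φ (f x) - c‖ = ε := by
    intro x hx h
    have := norm_pos_iff.mpr (hne x hx)
    simp only [hΦ]
    rw [max_eq_left h, add_sub_cancel_left, norm_smul, Real.norm_eq_abs, abs_of_pos (by positivity)]
    field_simp
  refine ID_NR (fun x => P (Φ (f x)) - a) ?_ ?_ ?_
  · have h1 : ContinuousOn (fun x => Φ (f x)) B := by
      simp only [hΦ]
      have hd : ContinuousOn (fun x => max ε ‖f x - c‖ / ‖f x - c‖) B :=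
        ContinuousOn.div (by fun_prop) (by fun_prop)
          (fun x hx => norm_ne_zero_iff.mpr (hne x hx))
      fun_prop
    exact (hPC.continuous.comp_continuousOn h1).sub continuousOn_const
  · intro x hx
    have hxB : x ∈ B := by simpa [hB] using hx
    rcases le_total ε ‖f x - c‖ with h | h
    · show ‖P (Φ (f x)) - a - x‖ < 1
      rw [far x hxB h]
      have := hPG (f x)
      rw [hGf x hxB] at this
      linarith
    · have h1 := near x hxB h
      rw [dist_eq_norm] at hcd
      have h2 : ‖G (Φ (f x))‖ < 1 / 4 := by
        apply hGs
        calc ‖Φ (f x) - f 0‖ = ‖(Φ (f x) - c) + (c - f 0)‖ := by congr 1; abel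
          _ ≤ _ := norm_add_le _ _
          _ < 3 * ε := by linarith
      have h3 : ‖G (f x)‖ < 1 / 4 := by
        apply hGs
        calc ‖f x - f 0‖ = ‖(f x - c) + (c - f 0)‖ := by congr 1; abel
          _ ≤ _ := norm_add_le _ _
          _ < 3 * ε := by linarith
      rw [hGf x hxB] at h3
      have h4 := hPG (Φ (f x))
      calc ‖P (Φ (f x)) - a - x‖ = ‖(P (Φ (f x)) - a - G (Φ (f x))) + G (Φ (f x)) - x‖ := by congr 1; abel
        _ ≤ ‖(P (Φ (f x)) - a - G (Φ (f x))) + G (Φ (f x))‖ + ‖x‖ := norm_sub_le _ _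
        _ ≤ ‖(P (Φ (f x)) - a - G (Φ (f x)))‖ + ‖G (Φ (f x))‖ + ‖x‖ := by gcongr; exact norm_add_le _ _
        _ < 1 := by linarith
  · intro x hx h0
    have hxB : x ∈ B := by simpa [hB] using hx
    rcases le_total ε ‖f x - c‖ with h | h
    · simp only [far x hxB h] at h0
      have h1 := hPG (f x)
      rw [h0, zero_sub, norm_neg] at h1
      have h2 := hmS (f x) ⟨⟨x, hxB, rfl⟩, h⟩
      linarith
    · apply hPa
      refine ⟨Φ (f x), ?_, sub_eq_zero.mp h0⟩
      rw [mem_sphere, dist_eq_norm]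
      exact near x hxB h

/-- Invariance of domain for `EuclideanSpace`. -/
lemma ID_euclid {n : ℕ} {U : Set (EuclideanSpace ℝ (Fin n))} (hU : IsOpen U)
    (f : EuclideanSpace ℝ (Fin n) → EuclideanSpace ℝ (Fin n))
    (hf : ContinuousOn f U) (hi : InjOn f U) : IsOpen (f '' U) := by
  rw [isOpen_iff_mem_nhds]
  rintro _ ⟨x, hx, rfl⟩
  obtain ⟨r, hr, hrU⟩ := Metric.isOpen_iff.mp hU x hx
  set s := r / 3 with hs
  have hsp : 0 < s := by positivity
  have hmap : ∀ v ∈ closedBall (0 : EuclideanSpace ℝ (Fin n)) 2, x + s • v ∈ U := by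
    intro v hv
    apply hrU
    rw [mem_closedBall_zero_iff] at hv
    rw [mem_ball, dist_eq_norm, add_sub_cancel_left, norm_smul, Real.norm_eq_abs, abs_of_pos hsp]
    nlinarith
  have := ID_core (fun v => f (x + s • v)) (hf.comp (by fun_prop) hmap) (by
    intro v hv w hw h
    have h1 := hi (hmap v hv) (hmap w hw) h
    have h2 := add_left_cancel h1
    exact smul_right_injective _ hsp.ne' h2)
  simp only [smul_zero, add_zero] at this
  rw [mem_interior_iff_mem_nhds] at this
  refine Filter.mem_of_superset this ?_
  rintro _ ⟨v, hv, rfl⟩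
  exact ⟨_, hmap v hv, rfl⟩

/-- Invariance of domain between real finite-dimensional spaces of equal dimension. -/
lemma ID_findim {E F : Type*} [NormedAddCommGroup E] [NormedSpace ℝ E] [FiniteDimensional ℝ E]
    [NormedAddCommGroup F] [NormedSpace ℝ F] [FiniteDimensional ℝ F]
    (hEF : Module.finrank ℝ E = Module.finrank ℝ F) {U : Set E} (hU : IsOpen U)
    (f : E → F) (hf : ContinuousOn f U) (hi : InjOn f U) : IsOpen (f '' U) := by
  let n := Module.finrank ℝ E
  let a : EuclideanSpace ℝ (Fin n) ≃L[ℝ] E := ContinuousLinearEquiv.ofFinrankEq (by simp [n])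
  let b : F ≃L[ℝ] EuclideanSpace ℝ (Fin n) := ContinuousLinearEquiv.ofFinrankEq (by simp [n, hEF])
  have h1 := ID_euclid (hU.preimage a.continuous) (fun x => b (f (a x)))
    (b.continuous.comp_continuousOn (hf.comp a.continuous.continuousOn (fun x hx => hx)))
    (fun x hx y hy h => a.injective (hi hx hy (b.injective h)))
  have h3 : f '' U = b ⁻¹' ((fun x => b (f (a x))) '' (a ⁻¹' U)) := by
    ext y
    simp only [mem_image, mem_preimage]
    constructor
    · rintro ⟨x, hx, rfl⟩
      exact ⟨a.symm x, by simpa using hx, by simp⟩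
    · rintro ⟨x, hx, h⟩
      exact ⟨a x, hx, b.injective h⟩
  rw [h3]
  exact h1.preimage b.continuous

/-- Invariance of domain into a manifold: injective continuous maps are open. -/
lemma ID_manifold {E : Type*} [NormedAddCommGroup E] [NormedSpace ℝ E] [FiniteDimensional ℝ E]
    {M : Type*} [TopologicalSpace M] {n : ℕ} [ChartedSpace (EuclideanSpace ℝ (Fin n)) M]
    (hE : Module.finrank ℝ E = n) {U : Set E} (hU : IsOpen U)
    (f : E → M) (hf : ContinuousOn f U) (hi : InjOn f U) : IsOpen (f '' U) := by
  rw [isOpen_iff_mem_nhds]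
  rintro _ ⟨x, hx, rfl⟩
  let e := chartAt (EuclideanSpace ℝ (Fin n)) (f x)
  have hUo : IsOpen (U ∩ f ⁻¹' e.source) := hf.isOpen_inter_preimage hU e.open_source
  have h1 := ID_findim (F := EuclideanSpace ℝ (Fin n)) (by simp [hE]) hUo (fun x => e (f x))
    (e.continuousOn.comp (hf.mono inter_subset_left) (fun x hx => hx.2))
    (fun x hx y hy h => hi hx.1 hy.1 (e.injOn hx.2 hy.2 h))
  have h2 : e.source ∩ e ⁻¹' ((fun x => e (f x)) '' (U ∩ f ⁻¹' e.source)) ⊆ f '' U := by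
    rintro y ⟨hy, z, hz, hzy⟩
    exact ⟨z, hz.1, e.injOn hz.2 hy hzy⟩
  refine Filter.mem_of_superset ((e.continuousOn.isOpen_inter_preimage e.open_source h1).mem_nhds ⟨?_, ?_⟩) h2
  · exact mem_chart_source _ _
  · exact ⟨x, ⟨hx, mem_chart_source _ _⟩, rfl⟩

lemma iterZ_zero (f : M ≃ₜ M) (x : M) : iterZ f 0 x = x := by simp [iterZ]

lemma iterZ_add (f : M ≃ₜ M) (a b : ℤ) (x : M) : iterZ f (a + b) x = iterZ f a (iterZ f b x) := by
  simp [iterZ, zpow_add]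

lemma iterZ_one (f : M ≃ₜ M) (x : M) : iterZ f 1 x = f x := by simp [iterZ]

lemma iterZ_neg_one (f : M ≃ₜ M) (x : M) : iterZ f (-1) x = f.symm x := by
  simp [iterZ]

lemma iterZ_neg_cancel (f : M ≃ₜ M) (a : ℤ) (x : M) : iterZ f (-a) (iterZ f a x) = x := by
  rw [← iterZ_add, neg_add_cancel, iterZ_zero]

lemma iterZ_cancel_neg (f : M ≃ₜ M) (a : ℤ) (x : M) : iterZ f a (iterZ f (-a) x) = x := by
  rw [← iterZ_add, add_neg_cancel, iterZ_zero]

lemma iterZ_continuous (f : M ≃ₜ M) (k : ℤ) : Continuous (iterZ f k) := by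
  have hp : ∀ k : ℕ, Continuous (iterZ f k) := by
    intro k
    induction k with
    | zero => exact continuous_id.congr (fun x => by simp [iterZ_zero])
    | succ k ih =>
      have : iterZ f ((k + 1 : ℕ) : ℤ) = fun x => iterZ f k (f x) := by
        funext x; push_cast; rw [iterZ_add, iterZ_one]
      rw [this]; exact ih.comp f.continuous
  have hn : ∀ k : ℕ, Continuous (iterZ f (-(k : ℤ))) := by
    intro k
    induction k with
    | zero => exact continuous_id.congr (fun x => by simp [iterZ_zero])
    | succ k ih =>
      have : iterZ f (-((k + 1 : ℕ) : ℤ)) = fun x => iterZ f (-(k:ℤ)) (f.symm x) := by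
        funext x; push_cast; rw [neg_add, iterZ_add, iterZ_neg_one]
      rw [this]; exact ih.comp f.symm.continuous
  rcases Int.eq_nat_or_neg k with ⟨j, rfl | rfl⟩
  · exact hp j
  · exact hn j

lemma iterZ_symm (f : M ≃ₜ M) (k : ℤ) (x : M) : iterZ f.symm k x = iterZ f (-k) x := by
  have : f.symm.toEquiv = (f.toEquiv)⁻¹ := rfl
  simp [iterZ, this]

lemma WuLoc_eq (f : M ≃ₜ M) (ε : ℝ) (x : M) : WuLoc f ε x = WsLoc f.symm ε x := by
  ext y
  simp only [WuLoc, WsLoc, mem_ofPred_eq, iterZ_symm]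
  constructor
  · intro h k hk; exact h (-k) (by linarith)
  · intro h k hk; simpa using h (-k) (by linarith)

lemma IsExpansive.symm {f : M ≃ₜ M} {α : ℝ} (h : IsExpansive f α) : IsExpansive f.symm α := by
  intro x y hxy
  obtain ⟨k, hk⟩ := h x y hxy
  exact ⟨-k, by simpa [iterZ_symm] using hk⟩

lemma WsLoc_refl (f : M ≃ₜ M) {ε : ℝ} (hε : 0 ≤ ε) (x : M) : x ∈ WsLoc f ε x := by
  intro k _; simpa using hε

lemma WsLoc_symm (f : M ≃ₜ M) {ε : ℝ} {x y : M} (h : y ∈ WsLoc f ε x) : x ∈ WsLoc f ε y := by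
  intro k hk; rw [dist_comm]; exact h k hk

lemma WsLoc_mono (f : M ≃ₜ M) {ε ε' : ℝ} (hε : ε ≤ ε') {x y : M} (h : y ∈ WsLoc f ε x) :
    y ∈ WsLoc f ε' x := fun k hk => (h k hk).trans hε

lemma WsLoc_trans (f : M ≃ₜ M) {ε ε' : ℝ} {x y z : M} (h : y ∈ WsLoc f ε x) (h' : z ∈ WsLoc f ε' y) :
    z ∈ WsLoc f (ε + ε') x := fun k hk => (dist_triangle _ _ _).trans (add_le_add (h k hk) (h' k hk))

lemma WsLoc_closed (f : M ≃ₜ M) (ε : ℝ) : IsClosed {a : M × M | a.2 ∈ WsLoc f ε a.1} := by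
  have : {a : M × M | a.2 ∈ WsLoc f ε a.1} = ⋂ k : ℤ, ⋂ _ : 0 ≤ k, {a | dist (iterZ f k a.1) (iterZ f k a.2) ≤ ε} := by
    ext a; simp [WsLoc]
  rw [this]
  refine isClosed_iInter fun k => isClosed_iInter fun _ => isClosed_le ?_ continuous_const
  exact ((iterZ_continuous f k).comp continuous_fst).dist ((iterZ_continuous f k).comp continuous_snd)

lemma Ws_Wu_eq {f : M ≃ₜ M} {α : ℝ} (h : IsExpansive f α) {x y : M} (hs : y ∈ WsLoc f α x)
    (hu : y ∈ WsLoc f.symm α x) : x = y := by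
  by_contra hne
  obtain ⟨k, hk⟩ := h x y hne
  rcases le_total 0 k with h0 | h0
  · exact absurd (hs k h0) (not_le.mpr hk)
  · have := hu (-k) (by linarith)
    rw [iterZ_symm, iterZ_symm, neg_neg] at this
    exact absurd this (not_le.mpr hk)

/-- Uniform expansivity. -/
lemma unif_exp [CompactSpace M] {f : M ≃ₜ M} {α : ℝ} (h : IsExpansive f α) {η : ℝ} (hη : 0 < η) :
    ∃ N : ℕ, ∀ a b : M, (∀ j : ℤ, |j| ≤ N → dist (iterZ f j a) (iterZ f j b) ≤ α) → dist a b < η := by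
  by_contra hcon
  push Not at hcon
  let C : ℕ → Set (M × M) := fun N => {a | η ≤ dist a.1 a.2 ∧ ∀ j : ℤ, |j| ≤ N → dist (iterZ f j a.1) (iterZ f j a.2) ≤ α}
  have hC : ∀ N, IsClosed (C N) := by
    intro N
    have : C N = {a | η ≤ dist a.1 a.2} ∩ ⋂ j : ℤ, ⋂ _ : |j| ≤ N, {a | dist (iterZ f j a.1) (iterZ f j a.2) ≤ α} := by
      ext a; simp [C]
    rw [this]
    refine (isClosed_le continuous_const continuous_dist).inter (isClosed_iInter fun k => isClosed_iInter fun _ => isClosed_le ?_ continuous_const)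
    exact ((iterZ_continuous f k).comp continuous_fst).dist ((iterZ_continuous f k).comp continuous_snd)
  obtain ⟨⟨a, b⟩, hab⟩ := IsCompact.nonempty_iInter_of_sequence_nonempty_isCompact_isClosed C
    (fun N a ha => ⟨ha.1, fun j hj => ha.2 j (hj.trans (by push_cast; linarith))⟩)
    (fun N => by obtain ⟨a, b, h1, h2⟩ := hcon N; exact ⟨(a, b), h2, h1⟩)
    (hC 0).isCompact hC
  simp only [mem_iInter] at hab
  have hne : a ≠ b := by
    rintro rfl
    have := (hab 0).1
    simp at this
    linarith
  obtain ⟨k, hk⟩ := h a b hne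
  have := (hab k.natAbs).2 k (by simp)
  exact absurd this (not_le.mpr hk)

/-- Uniform contraction on local stable sets. -/
lemma unif_contr [CompactSpace M] {f : M ≃ₜ M} {α δ : ℝ} (h : IsExpansive f α) (hδ : δ ≤ α) {η : ℝ} (hη : 0 < η) :
    ∃ N : ℕ, ∀ x y : M, y ∈ WsLoc f δ x → ∀ k : ℤ, N ≤ k → dist (iterZ f k x) (iterZ f k y) < η := by
  obtain ⟨N, hN⟩ := unif_exp h hη
  refine ⟨N, fun x y hxy k hk => hN _ _ fun j hj => ?_⟩
  rw [← iterZ_add, ← iterZ_add]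
  refine (hxy _ ?_).trans hδ
  have := neg_abs_le j
  linarith

lemma rho_lemma [CompactSpace M] {f : M ≃ₜ M} {α δ : ℝ} (h : IsExpansive f α) (hδ : δ ≤ α) {η : ℝ} (hη : 0 < η) :
    ∃ ρ > 0, ∀ x y : M, y ∈ WsLoc f δ x → dist x y < ρ → y ∈ WsLoc f η x := by
  obtain ⟨N, hN⟩ := unif_contr h hδ hη
  have huc : ∀ k : ℕ, ∃ ρ > 0, ∀ x y : M, dist x y < ρ → dist (iterZ f k x) (iterZ f k y) < η := by
    intro k
    have := CompactSpace.uniformContinuous_of_continuous (iterZ_continuous f k)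
    obtain ⟨ρ, h1, h2⟩ := Metric.uniformContinuous_iff.mp this η hη
    exact ⟨ρ, h1, fun x y h => h2 h⟩
  have hfin : ∀ N : ℕ, ∃ ρ > 0, ∀ x y : M, dist x y < ρ → ∀ k : ℕ, k < N → dist (iterZ f k x) (iterZ f k y) < η := by
    intro N
    induction N with
    | zero => exact ⟨1, one_pos, by simp⟩
    | succ N ih =>
      obtain ⟨ρ, h1, h2⟩ := ih
      obtain ⟨ρ', h1', h2'⟩ := huc N
      refine ⟨min ρ ρ', lt_min h1 h1', fun x y hxy k hk => ?_⟩
      rcases Nat.lt_succ_iff_lt_or_eq.mp hk with hk | rfl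
      · exact h2 x y (hxy.trans_le (min_le_left _ _)) k hk
      · exact h2' x y (hxy.trans_le (min_le_right _ _))
  obtain ⟨ρ, h1, h2⟩ := hfin N
  refine ⟨ρ, h1, fun x y hxy hd k hk => ?_⟩
  rcases lt_or_ge k N with h3 | h3
  · lift k to ℕ using hk
    exact (h2 x y hd k (by exact_mod_cast h3)).le
  · exact (hN x y hxy k h3).le

lemma hyp_leaf [CompactSpace M] {E1 E2 : Type*} [NormedAddCommGroup E1] [NormedSpace ℝ E1]
    [NormedAddCommGroup E2] [NormedSpace ℝ E2] {g : M ≃ₜ M} {α δ : ℝ} (hexp : IsExpansive g α)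
    (hδα : δ ≤ α) (l : ℕ) (hl : 1 ≤ l) (z : M) (hz : iterZ g l z = z)
    (e : OpenPartialHomeomorph M (E1 × E2)) (hze : z ∈ e.source) (hez : e z = 0)
    (hconj : ∀ x ∈ e.source, iterZ g l x ∈ e.source →
      e (iterZ g l x) = ((1/2 : ℝ) • (e x).1, (2 : ℝ) • (e x).2)) :
    ∃ i : E1 → M, Continuous i ∧ Function.Injective i ∧ i 0 = z ∧
      (∀ w ∈ WsLoc g δ z, w ∈ range i) ∧
      (∀ v, ∀ η > 0, ∀ᶠ v' in nhds v, i v' ∈ WsLoc g η (i v)) ∧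
      (∀ v, v ≠ 0 → ∃ c : ℝ, 1 ≤ c ∧ i (c • v) ∉ WsLoc g δ z) := by
  have hsz : e.symm 0 = z := by rw [← hez]; exact e.left_inv hze
  have h0t : (0 : E1 × E2) ∈ e.target := by rw [← hez]; exact e.map_source hze
  obtain ⟨t0, ht0, hball⟩ : ∃ t0 > 0, ∀ q ∈ ball (0 : E1 × E2) t0,
      q ∈ e.target ∧ iterZ g l (e.symm q) ∈ e.source := by
    have h1 : ∀ᶠ q in nhds (0 : E1 × E2), q ∈ e.target := e.open_target.mem_nhds h0t
    have h2 : ∀ᶠ q in nhds (0 : E1 × E2), iterZ g l (e.symm q) ∈ e.source := by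
      have hc : ContinuousAt (fun q => iterZ g l (e.symm q)) 0 :=
        (iterZ_continuous g l).continuousAt.comp (e.continuousAt_symm h0t)
      apply hc.eventually
      apply e.open_source.mem_nhds
      simp only [hsz, hz, hze]
    exact Metric.eventually_nhds_iff_ball.mp (h1.and h2)
  set a : E1 → M := fun v => e.symm (v, 0) with ha
  have hmem : ∀ v : E1, ‖v‖ < t0 → ((v, 0) : E1 × E2) ∈ ball (0 : E1 × E2) t0 := by
    intro v hv
    rw [mem_ball_zero_iff, Prod.norm_def]
    simp [hv]
  have hG : ∀ v : E1, ‖v‖ < t0 → iterZ g l (a v) = a ((1/2 : ℝ) • v) := by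
    intro v hv
    obtain ⟨h1, h2⟩ := hball _ (hmem v hv)
    have h3 := hconj (a v) (e.map_target h1) h2
    simp only [ha] at h3 ⊢
    rw [e.right_inv h1] at h3
    simp only [smul_zero] at h3
    rw [← h3, e.left_inv h2]
  have hhalf : ∀ (v : E1) (k : ℕ), ‖((1/2 : ℝ)^k) • v‖ ≤ ‖v‖ := by
    intro v k
    rw [norm_smul, norm_pow]
    have : ‖(1/2 : ℝ)‖ ^ k ≤ 1 := pow_le_one₀ (norm_nonneg _) (by norm_num)
    nlinarith [norm_nonneg v]
  have hGk : ∀ (k : ℕ) (v : E1), ‖v‖ < t0 → iterZ g (l * k) (a v) = a (((1/2 : ℝ)^k) • v) := by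
    intro k
    induction k with
    | zero => intro v _; simp [iterZ_zero]
    | succ k ih =>
      intro v hv
      have : (l : ℤ) * ((k + 1 : ℕ) : ℤ) = l + l * k := by push_cast; ring
      rw [this, iterZ_add, ih v hv, hG _ ((hhalf v k).trans_lt hv), smul_smul, pow_succ, mul_comm]
  have hex : ∀ v : E1, ∃ k : ℕ, ‖((1/2 : ℝ)^k) • v‖ < t0 := by
    intro v
    have : Filter.Tendsto (fun k : ℕ => ‖((1/2 : ℝ)^k) • v‖) Filter.atTop (nhds 0) := by
      have h1 : Filter.Tendsto (fun k : ℕ => ((1/2 : ℝ)^k)) Filter.atTop (nhds 0) :=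
        tendsto_pow_atTop_nhds_zero_of_lt_one (by norm_num) (by norm_num)
      have := (h1.smul_const v).norm
      simpa using this
    exact (this.eventually_lt_const ht0).exists
  choose K hK using hex
  set i : E1 → M := fun v => iterZ g (-(l * K v)) (a (((1/2 : ℝ)^(K v)) • v)) with hi
  have hshift : ∀ (v : E1) (k j : ℕ), ‖((1/2 : ℝ)^k) • v‖ < t0 →
      iterZ g (-(l * ((k + j : ℕ) : ℤ))) (a (((1/2 : ℝ)^(k+j)) • v)) = iterZ g (-(l * k)) (a (((1/2 : ℝ)^k) • v)) := by
    intro v k j hk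
    have h1 := hGk j _ hk
    rw [smul_smul, ← pow_add, add_comm j k] at h1
    rw [← h1, ← iterZ_add]
    congr 1
    push_cast; ring
  have key : ∀ (v : E1) (k : ℕ), ‖((1/2 : ℝ)^k) • v‖ < t0 → i v = iterZ g (-(l * k)) (a (((1/2 : ℝ)^k) • v)) := by
    intro v k hk
    rw [← hshift v k (K v) hk, add_comm k (K v), hshift v (K v) k (hK v)]
  have hlt : ∀ v : E1, ‖v‖ < t0 → i v = a v := by
    intro v hv
    have := key v 0 (by simpa using hv)
    simpa [iterZ_zero] using this
  have hscale : ∀ (k : ℕ) (v : E1), iterZ g (l * k) (i v) = i (((1/2 : ℝ)^k) • v) := by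
    intro k v
    have hlt' : ‖((1/2 : ℝ)^(K v)) • (((1/2 : ℝ)^k) • v)‖ < t0 := by
      rw [smul_comm]; exact (hhalf _ k).trans_lt (hK v)
    rw [key _ (K v) hlt', hi]
    rw [smul_comm, ← hGk k _ (hK v), ← iterZ_add, ← iterZ_add]
    congr 1; ring
  have hiter_inj : ∀ k : ℤ, Function.Injective (iterZ g k) := fun k =>
    Function.LeftInverse.injective (g := iterZ g (-k)) (iterZ_neg_cancel g k)
  have hac : ContinuousOn a (ball 0 t0) := by
    have : MapsTo (fun v : E1 => ((v, 0) : E1 × E2)) (ball 0 t0) e.target := fun v hv =>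
      (hball _ (hmem v (by simpa using hv))).1
    exact e.continuousOn_symm.comp (by fun_prop) this
  have hcont : Continuous i := by
    rw [continuous_iff_continuousAt]
    intro v
    have hop : IsOpen {v' : E1 | ‖((1/2 : ℝ)^(K v)) • v'‖ < t0} := isOpen_lt (by fun_prop) continuous_const
    have hloc : ContinuousOn (fun v' => iterZ g (-(l * K v)) (a (((1/2 : ℝ)^(K v)) • v'))) {v' : E1 | ‖((1/2 : ℝ)^(K v)) • v'‖ < t0} := by
      refine (iterZ_continuous g _).comp_continuousOn (hac.comp (by fun_prop) ?_)
      intro v' hv'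
      rw [mem_ball_zero_iff]
      exact hv'
    have hc := hloc.continuousAt (hop.mem_nhds (hK v))
    refine hc.congr ?_
    filter_upwards [hop.mem_nhds (hK v)] with v' hv'
    exact (key v' (K v) hv').symm
  have hinj : Function.Injective i := by
    intro v w hvw
    have h1 : ‖((1/2 : ℝ)^(K v + K w)) • v‖ < t0 := by
      rw [add_comm, pow_add, mul_smul]; exact (hhalf _ _).trans_lt (hK v)
    have h2 : ‖((1/2 : ℝ)^(K v + K w)) • w‖ < t0 := by
      rw [pow_add, mul_smul]; exact (hhalf _ _).trans_lt (hK w)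
    rw [key v _ h1, key w _ h2] at hvw
    have h3 := hiter_inj _ hvw
    have h4 := e.symm.injOn (hball _ (hmem _ h1)).1 (hball _ (hmem _ h2)).1 h3
    have h5 : ((1/2 : ℝ)^(K v + K w)) • v = ((1/2 : ℝ)^(K v + K w)) • w := congrArg Prod.fst h4
    exact smul_right_injective _ (by positivity) h5
  have hi0 : i 0 = z := by
    rw [hlt 0 (by simpa using ht0), ha]
    exact hsz
  have hzk : ∀ k : ℕ, iterZ g (l * k) z = z := by
    intro k
    have := hscale k 0
    rwa [smul_zero, hi0] at this
  -- local stable at the origin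
  have hloc0 : ∀ η > 0, ∃ s > 0, ∀ v : E1, ‖v‖ < s → i v ∈ WsLoc g η z := by
    intro η hη
    have h1 : ∀ᶠ v in nhds (0 : E1), ∀ r ∈ Finset.range l, dist (iterZ g r z) (iterZ g r (i v)) < η := by
      rw [Filter.eventually_all_finset]
      intro r _
      have : Continuous fun v => dist (iterZ g r z) (iterZ g r (i v)) :=
        continuous_const.dist ((iterZ_continuous g r).comp hcont)
      exact this.continuousAt.eventually_lt_const (by simp [hi0, hη])
    obtain ⟨s, hs, hs'⟩ := Metric.eventually_nhds_iff_ball.mp h1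
    refine ⟨s, hs, fun v hv k hk => ?_⟩
    lift k to ℕ using hk
    have hdm := Nat.div_add_mod k l
    have hkk : (k : ℤ) = ((k % l : ℕ) : ℤ) + l * ((k / l : ℕ) : ℤ) := by
      rw [add_comm]; exact_mod_cast hdm.symm
    rw [hkk, iterZ_add, iterZ_add, hzk, hscale]
    refine (hs' _ ?_ (k % l) (Finset.mem_range.mpr (Nat.mod_lt _ (by omega)))).le
    rw [mem_ball_zero_iff]
    exact (hhalf v _).trans_lt hv
  refine ⟨i, hcont, hinj, hi0, ?_, ?_, ?_⟩
  · -- the local stable set lies in the leaf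
    intro w hw
    have hnb : e.source ∩ e ⁻¹' (ball 0 t0) ∈ nhds z := by
      refine (e.continuousOn.isOpen_inter_preimage e.open_source isOpen_ball).mem_nhds ⟨hze, ?_⟩
      simp [hez, ht0]
    obtain ⟨η, hη, hηs⟩ := Metric.mem_nhds_iff.mp hnb
    obtain ⟨N, hN⟩ := unif_contr hexp hδα hη
    have hin : ∀ k : ℕ, N ≤ k → iterZ g (l * k) w ∈ e.source ∩ e ⁻¹' (ball 0 t0) := by
      intro k hk
      apply hηs
      have := hN z w hw (l * k) (by exact_mod_cast hk.trans (Nat.le_mul_of_pos_left k hl))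
      rw [hzk k] at this
      rwa [mem_ball, dist_comm]
    set x := iterZ g (l * N) w with hx
    have hstep : ∀ j : ℕ, iterZ g (l * ((N + j : ℕ) : ℤ)) w = iterZ g (l * j) x := by
      intro j
      rw [hx, ← iterZ_add]; congr 1; push_cast; ring
    have hxin : ∀ j : ℕ, iterZ g (l * j) x ∈ e.source ∩ e ⁻¹' (ball 0 t0) := by
      intro j; rw [← hstep]; exact hin _ (by omega)
    have hexpd : ∀ j : ℕ, (e (iterZ g (l * j) x)).2 = (2 : ℝ)^j • (e x).2 := by
      intro j
      induction j with
      | zero => simp [iterZ_zero]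
      | succ j ih =>
        have e1 : iterZ g (l * ((j + 1 : ℕ) : ℤ)) x = iterZ g l (iterZ g (l * j) x) := by
          have e0 : (l : ℤ) * ((j + 1 : ℕ) : ℤ) = l + l * j := by push_cast; ring
          rw [e0, iterZ_add]
        have h1 := (hxin (j+1)).1
        rw [e1] at h1 ⊢
        rw [hconj _ (hxin j).1 h1]
        simp only [ih, smul_smul, pow_succ, mul_comm]
    have hb : (e x).2 = 0 := by
      by_contra hne
      have hpos : 0 < ‖(e x).2‖ := norm_pos_iff.mpr hne
      obtain ⟨j, hj⟩ := pow_unbounded_of_one_lt (t0 / ‖(e x).2‖) (one_lt_two (α := ℝ))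
      have h1 := (hxin j).2
      rw [mem_preimage, mem_ball_zero_iff] at h1
      have h2 : ‖(e (iterZ g (l * j) x)).2‖ < t0 := (norm_snd_le _).trans_lt h1
      rw [hexpd, norm_smul, norm_pow, Real.norm_of_nonneg (by norm_num : (0:ℝ) ≤ 2)] at h2
      rw [div_lt_iff₀ hpos] at hj
      linarith
    have hxs : x ∈ e.source ∩ e ⁻¹' (ball 0 t0) := by
      have := hxin 0; simpa [iterZ_zero] using this
    have hv : ‖(e x).1‖ < t0 := (norm_fst_le _).trans_lt (by simpa using hxs.2)
    have hxa : x = i ((e x).1) := by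
      rw [hlt _ hv, ha]
      have : ((e x).1, (0 : E2)) = e x := by rw [← hb]
      simp only [this]
      exact (e.left_inv hxs.1).symm
    refine ⟨(2 : ℝ)^N • (e x).1, ?_⟩
    apply hiter_inj (l * N)
    rw [hscale, smul_smul, ← mul_pow]
    norm_num
    rw [← hxa]
  · intro v η hη
    obtain ⟨s, hs, hs'⟩ := hloc0 (η / 2) (by positivity)
    obtain ⟨J, hJ⟩ : ∃ J : ℕ, ‖((1/2 : ℝ)^J) • v‖ < s := by
      have : Filter.Tendsto (fun k : ℕ => ‖((1/2 : ℝ)^k) • v‖) Filter.atTop (nhds 0) := by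
        have h1 : Filter.Tendsto (fun k : ℕ => ((1/2 : ℝ)^k)) Filter.atTop (nhds 0) :=
          tendsto_pow_atTop_nhds_zero_of_lt_one (by norm_num) (by norm_num)
        have := (h1.smul_const v).norm
        simpa using this
      exact (this.eventually_lt_const hs).exists
    have h1 : ∀ᶠ v' in nhds v, ‖((1/2 : ℝ)^J) • v'‖ < s := by
      have : Continuous fun v' : E1 => ‖((1/2 : ℝ)^J) • v'‖ := by fun_prop
      exact this.continuousAt.eventually_lt_const hJ
    have h2 : ∀ᶠ v' in nhds v, ∀ r ∈ Finset.range (l * J), dist (iterZ g r (i v)) (iterZ g r (i v')) < η := by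
      rw [Filter.eventually_all_finset]
      intro r _
      have : Continuous fun v' => dist (iterZ g r (i v)) (iterZ g r (i v')) :=
        continuous_const.dist ((iterZ_continuous g r).comp hcont)
      exact this.continuousAt.eventually_lt_const (by simp [hη])
    filter_upwards [h1, h2] with v' h1 h2 k hk
    lift k to ℕ using hk
    rcases lt_or_ge k (l * J) with h3 | h3
    · exact (h2 k (Finset.mem_range.mpr h3)).le
    · obtain ⟨j, rfl⟩ := Nat.exists_eq_add_of_le h3
      have hkk : (((l * J + j : ℕ)) : ℤ) = (j : ℤ) + l * J := by push_cast; ring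
      rw [hkk, iterZ_add, iterZ_add, hscale, hscale]
      have h4 := hs' _ hJ j (by positivity)
      have h5 := hs' _ h1 j (by positivity)
      rw [dist_comm] at h4
      refine (dist_triangle _ _ _).trans ((add_le_add h4 h5).trans (by linarith))
  · intro v hv
    by_contra hcon
    push Not at hcon
    apply hv
    apply hinj
    rw [hi0]
    by_contra hne
    have hpos : 0 < dist z (i v) := dist_pos.mpr (fun h => hne h.symm)
    obtain ⟨N, hN⟩ := unif_contr hexp hδα hpos
    have h1 := hN z _ (hcon ((2:ℝ)^N) (one_le_pow₀ (by norm_num))) (l * N)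
      (by exact_mod_cast Nat.le_mul_of_pos_left N hl)
    rw [hzk, hscale, smul_smul, ← mul_pow] at h1
    norm_num at h1

/-- The open partial homeomorphism built from a homeomorphism between open subsets. -/
lemma exists_oph {X Y : Type*} [TopologicalSpace X] [TopologicalSpace Y] {U : Set X} {V : Set Y}
    (hU : IsOpen U) (hV : IsOpen V) (h : U ≃ₜ V) (x : X) (hx : x ∈ U) :
    ∃ e : OpenPartialHomeomorph X Y, e.source = U ∧ ∀ z (hz : z ∈ U), e z = h ⟨z, hz⟩ := by
  classical
  refine ⟨{ toFun := fun z => if hz : z ∈ U then h ⟨z, hz⟩ else h ⟨x, hx⟩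
            invFun := fun y => if hy : y ∈ V then h.symm ⟨y, hy⟩ else x
            source := U
            target := V
            map_source' := ?_
            map_target' := ?_
            left_inv' := ?_
            right_inv' := ?_
            open_source := hU
            open_target := hV
            continuousOn_toFun := ?_
            continuousOn_invFun := ?_ }, rfl, ?_⟩
  · intro z hz; simp [hz]
  · intro y hy; simp [hy]
  · intro z hz; simp [hz]
  · intro y hy; simp [hy]
  · rw [continuousOn_iff_continuous_domRestrict]
    have : Continuous fun z : U => ((h z : V) : Y) := by fun_prop
    exact this.congr fun z => by simp [z.2]
  · rw [continuousOn_iff_continuous_domRestrict]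
    have : Continuous fun z : V => ((h.symm z : U) : X) := by fun_prop
    exact this.congr fun z => by simp [z.2]
  · intro z hz
    simp [hz]

/-- A parametrised global (un)stable leaf of a hyperbolic periodic point. -/
def IsLeaf (g : M ≃ₜ M) (δ : ℝ) (z : M) {F : Type*} [NormedAddCommGroup F] [NormedSpace ℝ F]
    (i : F → M) : Prop :=
  Continuous i ∧ Function.Injective i ∧ i 0 = z ∧
      (∀ w ∈ WsLoc g δ z, w ∈ range i) ∧
      (∀ v, ∀ η > 0, ∀ᶠ v' in nhds v, i v' ∈ WsLoc g η (i v)) ∧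
      (∀ v, v ≠ 0 → ∃ c : ℝ, 1 ≤ c ∧ i (c • v) ∉ WsLoc g δ z)

lemma perhr_leaves [CompactSpace M] {f : M ≃ₜ M} {α δ : ℝ} (hexp : IsExpansive f α)
    (hδα : δ ≤ α) {n r : ℕ} {z : M} (hz : z ∈ PerHr f n r) :
    (∃ i : (Fin r → ℝ) → M, IsLeaf f δ z i) ∧ (∃ i : (Fin (n - r) → ℝ) → M, IsLeaf f.symm δ z i) := by
  obtain ⟨l, hl, hlz, U, V, h, hU, hV, h0, hp, hp0, hconj⟩ := hz
  obtain ⟨e, hes, he⟩ := exists_oph hU hV h z hp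
  have hit : ∀ x, iterZ f l x = (f.toEquiv ^ l) x := fun x => by simp [iterZ]
  have hconj' : ∀ x ∈ e.source, iterZ f l x ∈ e.source →
      e (iterZ f l x) = ((1/2 : ℝ) • (e x).1, (2 : ℝ) • (e x).2) := by
    intro x hx hx'
    rw [hit] at hx' ⊢
    rw [hes] at hx hx'
    rw [he _ hx, he _ hx', hconj x hx hx']
    simp only [modelL]
    ext j
    · simp; ring
    · simp
  have hez : e z = 0 := by rw [he z hp, hp0]
  have hze : z ∈ e.source := by rw [hes]; exact hp
  constructor
  · exact hyp_leaf hexp hδα l hl z (by rw [hit]; exact hlz) e hze hez hconj'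
  · let e' : OpenPartialHomeomorph M ((Fin (n - r) → ℝ) × (Fin r → ℝ)) :=
      e.trans (Homeomorph.prodComm _ _).toOpenPartialHomeomorph
    have hs' : e'.source = e.source := by simp [e']
    have he' : ∀ x, e' x = ((e x).2, (e x).1) := fun x => by simp [e', Prod.swap]
    refine hyp_leaf hexp.symm hδα l hl z ?_ e' (by rw [hs']; exact hze) (by rw [he', hez]; rfl) ?_
    · rw [iterZ_symm]
      have : iterZ f l z = z := by rw [hit]; exact hlz
      conv_lhs => rw [← this]
      exact iterZ_neg_cancel f l z
    · intro x hx hx'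
      rw [hs'] at hx hx'
      have hx2 : iterZ f l (iterZ f.symm l x) = x := by
        rw [iterZ_symm]; exact iterZ_cancel_neg f l x
      have h1 := hconj' _ hx' (by rw [hx2]; exact hx)
      rw [hx2] at h1
      rw [he', he', h1]
      simp [smul_smul]

lemma dim_le {F E : Type*} [NormedAddCommGroup F] [NormedSpace ℝ F] [FiniteDimensional ℝ F]
    [NormedAddCommGroup E] [NormedSpace ℝ E] [FiniteDimensional ℝ E] {U : Set F} (hU : IsOpen U)
    (hne : U.Nonempty) (θ : F → E) (hc : ContinuousOn θ U) (hi : InjOn θ U) :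
    Module.finrank ℝ F ≤ Module.finrank ℝ E := by
  by_contra hlt
  push Not at hlt
  obtain ⟨k, hk⟩ := Nat.exists_eq_add_of_lt hlt
  have h1 := ID_findim (F := E × (Fin (k + 1) → ℝ)) (by simp [hk]; ring) hU (fun v => (θ v, 0))
    (hc.prodMk continuousOn_const) (fun x hx y hy h => hi hx hy (congrArg Prod.fst h))
  obtain ⟨v, hv⟩ := hne
  have h2 := h1.mem_nhds (mem_image_of_mem _ hv)
  have hcc : Continuous fun s : ℝ => ((θ v, fun _ => s) : E × (Fin (k+1) → ℝ)) := by fun_prop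
  have h3 : ∀ᶠ s in nhds (0:ℝ), ((θ v, fun _ => s) : E × (Fin (k+1) → ℝ)) ∈ (fun v => ((θ v, 0) : E × (Fin (k+1) → ℝ))) '' U := by
    apply hcc.continuousAt.eventually
    exact h2
  obtain ⟨ε, hε, h4⟩ := Metric.eventually_nhds_iff_ball.mp h3
  obtain ⟨w, _, hw⟩ := h4 (ε / 2) (by rw [mem_ball_zero_iff, Real.norm_of_nonneg (by positivity)]; linarith)
  have := congrFun (congrArg Prod.snd hw) 0
  simp at this
  linarith

lemma openEmb_of_inj {E : Type*} [NormedAddCommGroup E] [NormedSpace ℝ E] [FiniteDimensional ℝ E]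
    {n : ℕ} [ChartedSpace (EuclideanSpace ℝ (Fin n)) M]
    (hE : Module.finrank ℝ E = n) (f : E → M) (hf : Continuous f) (hi : Function.Injective f) :
    Topology.IsOpenEmbedding f :=
  Topology.IsOpenEmbedding.of_continuous_injective_isOpenMap hf hi
    (fun U hU => ID_manifold hE hU f hf.continuousOn hi.injOn)

lemma plaque {E1 E2 F : Type*} [NormedAddCommGroup E1] [NormedSpace ℝ E1]
    [NormedAddCommGroup E2] [NormedSpace ℝ E2] [FiniteDimensional ℝ E2]
    [NormedAddCommGroup F] [NormedSpace ℝ F] [FiniteDimensional ℝ F]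
    (hF : Module.finrank ℝ F = Module.finrank ℝ E2) (g : M ≃ₜ M) {δ : ℝ} (hδ : 0 < δ)
    (φ : E1 × E2 → M) (hφ : Topology.IsOpenEmbedding φ)
    (hR : ∀ a b, φ b ∈ WsLoc g δ (φ a) → a.1 = b.1)
    (hρ : ∀ a b, φ b ∈ WsLoc g δ (φ a) → φ b ∈ WsLoc g (δ / 2) (φ a))
    (D : Set M) (hD : Dense D) (hleaf : ∀ z ∈ D, ∃ i : F → M, IsLeaf g δ z i) :
    ∀ a b, a.1 = b.1 → φ b ∈ WsLoc g δ (φ a) := by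
  have hDcase : ∀ t y, φ (t, y) ∈ D → ∀ y', φ (t, y') ∈ WsLoc g δ (φ (t, y)) := by
    intro t y hz
    obtain ⟨i, hic, hii, hi0, hi1, hi2, -⟩ := hleaf _ hz
    set z := φ (t, y) with hzdef
    set A : Set E2 := {y' | φ (t, y') ∈ WsLoc g δ z} with hA
    have hAcl : IsClosed A := by
      have : Continuous fun y' : E2 => (z, φ (t, y')) :=
        continuous_const.prodMk (hφ.continuous.comp (by fun_prop))
      exact (WsLoc_closed g δ).preimage this
    have hAo : IsOpen A := by
      rw [isOpen_iff_mem_nhds]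
      intro y' hy'
      obtain ⟨v, hv⟩ := hi1 _ hy'
      have h1 : i v ∈ WsLoc g (δ / 2) z := by rw [hv]; exact hρ _ _ hy'
      have h2 : ∀ᶠ v' in nhds v, i v' ∈ WsLoc g δ z := by
        filter_upwards [hi2 v (δ / 2) (by positivity)] with v' hv'
        have := WsLoc_trans g h1 hv'
        rwa [add_halves] at this
      have h3 : ∀ᶠ v' in nhds v, i v' ∈ range φ := by
        apply hic.continuousAt.eventually
        apply hφ.isOpen_range.mem_nhds
        rw [hv]; exact mem_range_self _
      obtain ⟨O, hO, hOo, hvO⟩ := _root_.eventually_nhds_iff.mp (h2.and h3)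
      let e := hφ.toOpenPartialHomeomorph φ
      have hes : ∀ a, e.symm (φ a) = a := fun a => hφ.toOpenPartialHomeomorph_left_inv φ
      have hsymm : ContinuousOn e.symm (range φ) := by
        have := e.continuousOn_symm
        simpa [e] using this
      have hθc : ContinuousOn (fun v' => (e.symm (i v')).2) O :=
        continuous_snd.comp_continuousOn (hsymm.comp hic.continuousOn (fun v' hv' => (hO v' hv').2))
      have hform : ∀ v' ∈ O, i v' = φ (t, (e.symm (i v')).2) := by
        intro v' hv'
        obtain ⟨h4, ⟨⟨t', y''⟩, h5⟩⟩ := hO v' hv'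
        rw [← h5, hes]
        rw [← h5] at h4
        have : t = t' := hR _ _ h4
        rw [this]
      have hθi : InjOn (fun v' => (e.symm (i v')).2) O := by
        intro v1 hv1 v2 hv2 h12
        apply hii
        rw [hform v1 hv1, hform v2 hv2]
        simp only at h12
        rw [h12]
      have hopen := ID_findim hF hOo _ hθc hθi
      refine Filter.mem_of_superset (hopen.mem_nhds ⟨v, hvO, ?_⟩) ?_
      · simp only [hv, hes]
      · rintro _ ⟨v', hv', rfl⟩
        show φ (t, (e.symm (i v')).2) ∈ WsLoc g δ z
        rw [← hform v' hv']
        exact (hO v' hv').1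
    have hAu : A = univ := IsClopen.eq_univ ⟨hAcl, hAo⟩ ⟨y, WsLoc_refl g hδ.le _⟩
    intro y'
    have : y' ∈ A := by rw [hAu]; trivial
    exact this
  rintro ⟨t, y⟩ ⟨t', y'⟩ rfl
  set C : Set (E1 × E2) := {a | φ (a.1, y') ∈ WsLoc g δ (φ a)} with hC
  have hCcl : IsClosed C := by
    have : Continuous fun a : E1 × E2 => (φ a, φ (a.1, y')) :=
      hφ.continuous.prodMk (hφ.continuous.comp (by fun_prop))
    exact (WsLoc_closed g δ).preimage this
  have hd : Dense (φ ⁻¹' D) := hD.preimage hφ.isOpenMap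
  have hsub : φ ⁻¹' D ⊆ C := fun a ha => hDcase a.1 a.2 ha y'
  have : C = univ := by
    rw [← univ_subset_iff, ← hd.closure_eq]
    exact closure_minimal hsub hCcl
  have h : (t, y) ∈ C := by rw [this]; trivial
  exact h

/-- A product box around `x` for the pair of relations `S`, `U`. -/
def IsBox (S U : M → M → Prop) (m : ℕ) (x : M) (φ : ℝ × (Fin m → ℝ) → M) : Prop :=
  Continuous φ ∧ Function.Injective φ ∧ φ 0 = x ∧
    (∀ a b, S (φ a) (φ b) ↔ a.1 = b.1) ∧ (∀ a b, U (φ a) (φ b) ↔ a.2 = b.2)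

/-- squeezing map of the line into `(-s, s)` -/
noncomputable def sqz (s t : ℝ) : ℝ := s * (Real.arctan t / 2)

lemma sqz_zero (s : ℝ) : sqz s 0 = 0 := by simp [sqz]

lemma sqz_cont (s : ℝ) : Continuous (sqz s) := by unfold sqz; fun_prop

lemma sqz_inj {s : ℝ} (hs : 0 < s) : Function.Injective (sqz s) := by
  intro a b h
  unfold sqz at h
  have h1 := mul_left_cancel₀ hs.ne' h
  exact Real.arctan_injective (by linarith)

lemma sqz_lt {s : ℝ} (hs : 0 < s) (t : ℝ) : |sqz s t| < s := by
  unfold sqz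
  have h1 := Real.arctan_lt_pi_div_two t
  have h2 := Real.neg_pi_div_two_lt_arctan t
  have h3 := Real.pi_lt_four
  rw [abs_mul, abs_of_pos hs]
  have : |Real.arctan t / 2| < 1 := by rw [abs_lt]; constructor <;> linarith
  nlinarith

lemma leaf_dim {E1 E2 F : Type*} [NormedAddCommGroup E1] [NormedSpace ℝ E1]
    [NormedAddCommGroup E2] [NormedSpace ℝ E2] [FiniteDimensional ℝ E2]
    [NormedAddCommGroup F] [NormedSpace ℝ F] [FiniteDimensional ℝ F] (g : M ≃ₜ M) {δ ε : ℝ} (hε : 0 < ε)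
    (φ : E1 × E2 → M) (hφ : Topology.IsOpenEmbedding φ)
    (hR : ∀ a b, φ b ∈ WsLoc g ε (φ a) → a.1 = b.1) (z : M) (hz : z ∈ range φ)
    (i : F → M) (hi : IsLeaf g δ z i) : Module.finrank ℝ F ≤ Module.finrank ℝ E2 := by
  obtain ⟨hic, hii, hi0, hi1, hi2, -⟩ := hi
  obtain ⟨⟨t, y⟩, hy⟩ := hz
  have h2 : ∀ᶠ v' in nhds 0, i v' ∈ WsLoc g ε z := by
    have := hi2 0 ε hε
    rwa [hi0] at this
  have h3 : ∀ᶠ v' in nhds 0, i v' ∈ range φ := by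
    apply hic.continuousAt.eventually
    apply hφ.isOpen_range.mem_nhds
    rw [hi0, ← hy]; exact mem_range_self _
  obtain ⟨O, hO, hOo, hvO⟩ := _root_.eventually_nhds_iff.mp (h2.and h3)
  let e := hφ.toOpenPartialHomeomorph φ
  have hes : ∀ a, e.symm (φ a) = a := fun a => hφ.toOpenPartialHomeomorph_left_inv φ
  have hsymm : ContinuousOn e.symm (range φ) := by
    have := e.continuousOn_symm
    simpa [e] using this
  have hθc : ContinuousOn (fun v' => (e.symm (i v')).2) O :=
    continuous_snd.comp_continuousOn (hsymm.comp hic.continuousOn (fun v' hv' => (hO v' hv').2))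
  have hform : ∀ v' ∈ O, i v' = φ (t, (e.symm (i v')).2) := by
    intro v' hv'
    obtain ⟨h4, ⟨⟨t', y''⟩, h5⟩⟩ := hO v' hv'
    rw [← h5, hes]
    rw [← h5, ← hy] at h4
    have : t = t' := hR _ _ h4
    rw [this]
  have hθi : InjOn (fun v' => (e.symm (i v')).2) O := by
    intro v1 hv1 v2 hv2 h12
    apply hii
    rw [hform v1 hv1, hform v2 hv2]
    simp only at h12
    rw [h12]
  exact dim_le hOo ⟨0, hvO⟩ _ hθc hθi

lemma box_of_LPS [CompactSpace M] {m : ℕ} [ChartedSpace (EuclideanSpace ℝ (Fin (m+1))) M]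
    {f : M ≃ₜ M} {α : ℝ} (hα : 0 < α) (hexp : IsExpansive f α)
    (hD : Dense (PerHr f (m+1) m)) {x : M} (hx : AdmitsLPS f (m+1) x) {O : Set M} (hO : O ∈ nhds x) :
    ∃ φ, IsBox (fun x y => y ∈ WsLoc f α x) (fun x y => y ∈ WsLoc f.symm α x) m x φ ∧
      range φ ⊆ O := by
  obtain ⟨k, h, ε, hε, hemb, hxr, hh⟩ := hx
  have hcont := hemb.continuous
  have hinj := hemb.injective
  have hsum : k + (m + 1 - k) = m + 1 := by
    have hle : Module.finrank ℝ ((Fin k → ℝ) × (Fin (m + 1 - k) → ℝ)) ≤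
        Module.finrank ℝ (EuclideanSpace ℝ (Fin (m+1))) := by
      let c := chartAt (EuclideanSpace ℝ (Fin (m+1))) x
      obtain ⟨a0, ha0⟩ := hxr
      refine dim_le (U := h ⁻¹' c.source) (c.open_source.preimage hcont) ⟨a0, ?_⟩ (fun a => c (h a)) ?_ ?_
      · show h a0 ∈ c.source
        rw [ha0]; exact mem_chart_source _ x
      · exact c.continuousOn.comp hcont.continuousOn (fun a ha => ha)
      · intro a ha b hb hab
        exact hinj (c.injOn ha hb hab)
    simp at hle
    omega
  have hoe : Topology.IsOpenEmbedding h := openEmb_of_inj (n := m + 1) (by simp [hsum]) h hcont hinj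
  have hS : ∀ a b, h b ∈ WsLoc f ε (h a) → a.1 = b.1 := by
    rintro ⟨a1, a2⟩ ⟨b1, b2⟩ hab
    have h1 : h (b1, b2) ∈ h '' ({a1} ×ˢ univ) := by
      rw [(hh a1 a2).1]; exact ⟨hab, mem_range_self _⟩
    obtain ⟨c, hc, hcb⟩ := h1
    have := hinj hcb
    subst this
    exact hc.1.symm
  have hU : ∀ a b, h b ∈ WsLoc f.symm ε (h a) → a.2 = b.2 := by
    rintro ⟨a1, a2⟩ ⟨b1, b2⟩ hab
    have h1 : h (b1, b2) ∈ h '' (univ ×ˢ {a2}) := by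
      rw [(hh a1 a2).2, WuLoc_eq]; exact ⟨hab, mem_range_self _⟩
    obtain ⟨c, hc, hcb⟩ := h1
    have := hinj hcb
    subst this
    exact hc.2.symm
  obtain ⟨z, hzr, hzD⟩ := hD.exists_mem_open hoe.isOpen_range ⟨x, hxr⟩
  have hk : k = 1 := by
    obtain ⟨⟨i, hi⟩, ⟨j, hj⟩⟩ := perhr_leaves hexp le_rfl hzr
    have h1 := leaf_dim f hε h hoe hS z hzD i hi
    have hoe' : Topology.IsOpenEmbedding (h ∘ Prod.swap) :=
      hoe.comp (Homeomorph.prodComm _ _).isOpenEmbedding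
    have h2 := leaf_dim f.symm hε (h ∘ Prod.swap) hoe' (fun a b hab => hU a.swap b.swap hab) z
      (by rw [range_comp, Prod.swap_surjective.range_eq, image_univ]; exact hzD) j hj
    simp at h1 h2
    omega
  subst hk
  change (Fin 1 → ℝ) × (Fin m → ℝ) → M at h
  obtain ⟨⟨x0, y0⟩, hx0⟩ := hxr
  obtain ⟨ρ1, hρ1, H1⟩ := rho_lemma hexp le_rfl hε
  obtain ⟨ρ2, hρ2, H2⟩ := rho_lemma hexp.symm le_rfl hε
  obtain ⟨ρ3, hρ3, H3⟩ := rho_lemma hexp le_rfl (half_pos hα)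
  obtain ⟨ρ4, hρ4, H4⟩ := rho_lemma hexp.symm le_rfl (half_pos hα)
  obtain ⟨ρ, hρ, hr1, hr2, hr3, hr4⟩ : ∃ ρ > 0, ρ ≤ ρ1 ∧ ρ ≤ ρ2 ∧ ρ ≤ ρ3 ∧ ρ ≤ ρ4 :=
    ⟨min (min ρ1 ρ2) (min ρ3 ρ4), by positivity, by simp, by simp, by simp, by simp⟩
  have hnb : h ⁻¹' (O ∩ ball x (ρ / 2)) ∈ nhds (x0, y0) := by
    apply hcont.continuousAt
    rw [hx0]
    exact Filter.inter_mem hO (ball_mem_nhds _ (by positivity))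
  obtain ⟨s, hs, hsub⟩ := Metric.mem_nhds_iff.mp hnb
  let ι : ℝ × (Fin m → ℝ) → (Fin 1 → ℝ) × (Fin m → ℝ) :=
    fun a => (fun j => x0 j + sqz s a.1, fun j => y0 j + sqz s (a.2 j))
  have hιc : Continuous ι := by
    have := sqz_cont s
    fun_prop
  have hι1 : ∀ a b, (ι a).1 = (ι b).1 → a.1 = b.1 := by
    intro a b hab
    have := congrFun hab 0
    simp only [ι] at this
    exact sqz_inj hs (by linarith)
  have hι2 : ∀ a b, (ι a).2 = (ι b).2 → a.2 = b.2 := by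
    intro a b hab
    ext j
    have := congrFun hab j
    simp only [ι] at this
    exact sqz_inj hs (by linarith)
  have hιb : ∀ a, ι a ∈ ball (x0, y0) s := by
    intro a
    rw [mem_ball, Prod.dist_eq, max_lt_iff, dist_pi_lt_iff hs, dist_pi_lt_iff hs]
    constructor
    · intro j
      simp only [ι, Real.dist_eq, add_sub_cancel_left]
      exact sqz_lt hs _
    · intro j
      simp only [ι, Real.dist_eq, add_sub_cancel_left]
      exact sqz_lt hs _
  let φ := h ∘ ι
  have hφc : Continuous φ := hcont.comp hιc
  have hφi : Function.Injective φ := by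
    intro a b hab
    have := hinj hab
    exact Prod.ext (hι1 _ _ (congrArg Prod.fst this)) (hι2 _ _ (congrArg Prod.snd this))
  have hφd : ∀ a b, dist (φ a) (φ b) < ρ := by
    intro a b
    have h1 := (hsub (hιb a)).2
    have h2 := (hsub (hιb b)).2
    rw [mem_ball] at h1 h2
    have := dist_triangle_right (φ a) (φ b) x
    simp only [φ, Function.comp] at this ⊢
    linarith
  have hφoe : Topology.IsOpenEmbedding φ := openEmb_of_inj (n := m + 1) (by simp; ring) φ hφc hφi
  have hφS : ∀ a b, φ b ∈ WsLoc f α (φ a) → a.1 = b.1 := fun a b hab =>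
    hι1 _ _ (hS _ _ (H1 _ _ hab ((hφd a b).trans_le hr1)))
  have hφU : ∀ a b, φ b ∈ WsLoc f.symm α (φ a) → a.2 = b.2 := fun a b hab =>
    hι2 _ _ (hU _ _ (H2 _ _ hab ((hφd a b).trans_le hr2)))
  refine ⟨φ, ⟨hφc, hφi, ?_, fun a b => ⟨hφS a b, ?_⟩, fun a b => ⟨hφU a b, ?_⟩⟩, ?_⟩
  · show h (ι 0) = x
    have : ι 0 = (x0, y0) := by simp [ι, sqz_zero]
    rw [this, hx0]
  · exact plaque (F := Fin m → ℝ) (by simp) f hα φ hφoe hφS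
      (fun a b hab => H3 _ _ hab ((hφd a b).trans_le hr3)) _ hD
      (fun z hz => (perhr_leaves hexp le_rfl hz).1) a b
  · have hoe' : Topology.IsOpenEmbedding (φ ∘ Prod.swap) :=
      hφoe.comp (Homeomorph.prodComm _ _).isOpenEmbedding
    exact plaque (F := Fin (m + 1 - m) → ℝ) (by simp) f.symm hα (φ ∘ Prod.swap) hoe'
      (fun a b hab => hφU a.swap b.swap hab)
      (fun a b hab => H4 _ _ hab ((hφd a.swap b.swap).trans_le hr4)) _ hD
      (fun z hz => (perhr_leaves hexp le_rfl hz).2) a.swap b.swap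
  · rintro _ ⟨a, rfl⟩
    exact (hsub (hιb a)).1

/-- The local setting around a possibly singular point `p`. -/
structure LocSet (S U : M → M → Prop) (m : ℕ) (p : M) (r0 : ℝ) (D : Set M) : Prop where
  pos : 0 < r0
  Scl : IsClosed {a : M × M | S a.1 a.2}
  Ucl : IsClosed {a : M × M | U a.1 a.2}
  Srefl : ∀ x, S x x
  Urefl : ∀ x, U x x
  Ssymm : ∀ x y, S x y → S y x
  Usymm : ∀ x y, U x y → U y x
  Strans : ∀ x ∈ closedBall p r0, ∀ y ∈ closedBall p r0, ∀ z ∈ closedBall p r0, S x y → S y z → S x z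
  Utrans : ∀ x ∈ closedBall p r0, ∀ y ∈ closedBall p r0, ∀ z ∈ closedBall p r0, U x y → U y z → U x z
  SU : ∀ x y, S x y → U x y → x = y
  box : ∀ x ∈ ball p r0, x ≠ p → ∀ O ∈ nhds x, ∃ φ, IsBox S U m x φ ∧ range φ ⊆ O
  dense : Dense D
  arc : ∀ z ∈ D, z ∈ closedBall p r0 → ∃ (c : ℝ → M) (T : ℝ), 0 ≤ T ∧ Continuous c ∧ c 0 = z ∧
    (∀ s ∈ Icc 0 T, U z (c s)) ∧ c T ∉ closedBall p r0

lemma leaf_arc {g : M ≃ₜ M} {δ ρ : ℝ} (hδ : 0 < δ) {B : Set M} {z : M} (hz : z ∈ B)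
    (hρ : ∀ x y, y ∈ WsLoc g δ x → dist x y < ρ → y ∈ WsLoc g (δ / 2) x)
    (hB : ∀ x ∈ B, ∀ y ∈ B, dist x y < ρ)
    {k : ℕ} (hk : k ≠ 0) {i : (Fin k → ℝ) → M} (hi : IsLeaf g δ z i) :
    ∃ (c : ℝ → M) (T : ℝ), 0 ≤ T ∧ Continuous c ∧ c 0 = z ∧
    (∀ s ∈ Icc 0 T, c s ∈ WsLoc g δ z) ∧ c T ∉ B := by
  obtain ⟨hic, -, hi0, -, hi2, hi3⟩ := hi
  let v : Fin k → ℝ := fun _ => 1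
  have hv : v ≠ 0 := by
    intro h
    have := congrFun h ⟨0, Nat.pos_of_ne_zero hk⟩
    simp [v] at this
  obtain ⟨c0, hc0, hc1⟩ := hi3 v hv
  by_contra hcon
  push Not at hcon
  have hcc : Continuous fun s : ℝ => i (s • v) := hic.comp (by fun_prop)
  have hcB : ∀ T : ℝ, 0 ≤ T → (∀ s ∈ Icc 0 T, i (s • v) ∈ WsLoc g δ z) → i (T • v) ∈ B :=
    fun T hT h => hcon (fun s => i (s • v)) T hT hcc (by simp [hi0]) h
  let K : Set ℝ := {T | ∀ s ∈ Icc (0:ℝ) 1, i ((s * T) • v) ∈ WsLoc g δ z}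
  have hK : ∀ T, 0 ≤ T → (T ∈ K ↔ ∀ s ∈ Icc 0 T, i (s • v) ∈ WsLoc g δ z) := by
    intro T hT
    constructor
    · intro h s hs
      rcases hT.eq_or_lt with h0 | h0
      · have h1 := h 0 (by simp)
        have : s = 0 := by rw [← h0] at hs; simpa using hs
        simpa [this] using h1
      · have := h (s / T) ⟨div_nonneg hs.1 hT, (div_le_one h0).mpr hs.2⟩
        rwa [div_mul_cancel₀ _ h0.ne'] at this
    · intro h s hs
      exact h _ ⟨mul_nonneg hs.1 hT, mul_le_of_le_one_left hT hs.2⟩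
  have hKcl : IsClosed K := by
    have : K = ⋂ s ∈ Icc (0:ℝ) 1, {T | i ((s * T) • v) ∈ WsLoc g δ z} := by
      ext T; simp [K]
    rw [this]
    refine isClosed_biInter (fun s _ => ?_)
    have hc : Continuous fun T : ℝ => (z, i ((s * T) • v)) :=
      continuous_const.prodMk (hic.comp (by fun_prop))
    exact (WsLoc_closed g δ).preimage hc
  have hmain : Icc 0 c0 ⊆ K := by
    apply IsClosed.Icc_subset_of_forall_mem_nhdsWithin (hKcl.inter isClosed_Icc)
    · rw [hK 0 le_rfl]
      intro s hs
      have : s = 0 := by simpa using hs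
      rw [this, zero_smul, hi0]
      exact WsLoc_refl g hδ.le z
    · rintro T ⟨hTK, hT⟩
      have h1 := (hK T hT.1).mp hTK
      have h2 := hcB T hT.1 h1
      have h3 := hρ _ _ (h1 T ⟨hT.1, le_rfl⟩) (hB _ hz _ h2)
      have h4 : ∀ᶠ s : ℝ in nhds T, i (s • v) ∈ WsLoc g δ z := by
        have hcT : Continuous fun s : ℝ => s • v := by fun_prop
        have := hcT.continuousAt.eventually (hi2 (T • v) (δ / 2) (half_pos hδ))
        filter_upwards [this] with s hs
        have := WsLoc_trans g h3 hs
        rwa [add_halves] at this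
      obtain ⟨e, he, h5⟩ := Metric.eventually_nhds_iff_ball.mp h4
      have : Ioo T (T + e) ∈ nhdsWithin T (Ioi T) := Ioo_mem_nhdsGT (by linarith)
      refine Filter.mem_of_superset this ?_
      intro T' hT'
      rw [hK T' (hT.1.trans hT'.1.le)]
      intro s hs
      rcases le_or_gt s T with h | h
      · exact h1 s ⟨hs.1, h⟩
      · apply h5
        rw [mem_ball, Real.dist_eq, abs_lt]
        constructor <;> linarith [hs.2, hT'.2]
  have := (hK c0 (by linarith)).mp (hmain ⟨by linarith, le_rfl⟩) c0 ⟨by linarith, le_rfl⟩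
  exact hc1 this

lemma exists_locset [CompactSpace M] {m : ℕ} [ChartedSpace (EuclideanSpace ℝ (Fin (m+1))) M]
    {f : M ≃ₜ M} {α : ℝ} (hα : 0 < α) (hexp : IsExpansive f α)
    (hD : Dense (PerHr f (m+1) m)) {p : M} {O : Set M} (hO : O ∈ nhds p)
    (hx : ∀ x ∈ O, x ≠ p → AdmitsLPS f (m+1) x) :
    ∃ r0, LocSet (fun x y => y ∈ WsLoc f α x) (fun x y => y ∈ WsLoc f.symm α x) m p r0
      (PerHr f (m+1) m) := by
  obtain ⟨ρ3, hρ3, H3⟩ := rho_lemma hexp le_rfl (half_pos hα)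
  obtain ⟨ρ4, hρ4, H4⟩ := rho_lemma hexp.symm le_rfl (half_pos hα)
  obtain ⟨r, hr, hrO⟩ := Metric.mem_nhds_iff.mp hO
  obtain ⟨r0, hr0, h1, h2, h3⟩ : ∃ r0 > 0, r0 ≤ r ∧ r0 ≤ ρ3 / 3 ∧ r0 ≤ ρ4 / 3 :=
    ⟨min r (min (ρ3 / 3) (ρ4 / 3)), by positivity, by simp, by simp, by simp⟩
  have hd : ∀ x ∈ closedBall p r0, ∀ y ∈ closedBall p r0, dist x y ≤ 2 * r0 := by
    intro x hx y hy
    rw [mem_closedBall] at hx hy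
    linarith [dist_triangle_right x y p]
  refine ⟨r0, hr0, WsLoc_closed f α, WsLoc_closed f.symm α, fun x => WsLoc_refl f hα.le x,
    fun x => WsLoc_refl f.symm hα.le x, fun x y h => WsLoc_symm f h, fun x y h => WsLoc_symm f.symm h,
    ?_, ?_, fun x y h h' => Ws_Wu_eq hexp h h', ?_, hD, ?_⟩
  · intro x hx y hy z hz h h'
    have := WsLoc_trans f (H3 _ _ h (by linarith [hd x hx y hy])) (H3 _ _ h' (by linarith [hd y hy z hz]))
    rwa [add_halves] at this
  · intro x hx y hy z hz h h'
    have := WsLoc_trans f.symm (H4 _ _ h (by linarith [hd x hx y hy])) (H4 _ _ h' (by linarith [hd y hy z hz]))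
    rwa [add_halves] at this
  · intro x hxb hxp O' hO'
    exact box_of_LPS hα hexp hD (hx x (hrO (ball_subset_ball h1 hxb)) hxp) hO'
  · intro z hz hzB
    obtain ⟨i, hi⟩ := (perhr_leaves hexp le_rfl hz).2
    exact leaf_arc hα hzB H4 (fun x hx y hy => by linarith [hd x hx y hy]) (by omega) hi

lemma prec_const {X : Type*} [TopologicalSpace X] {s : Set X} (hs : IsPreconnected s) (P : X → Prop)
    (h : ∀ x ∈ s, (∀ᶠ y in nhdsWithin x s, P y) ∨ (∀ᶠ y in nhdsWithin x s, ¬ P y)) :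
    ∀ x ∈ s, ∀ y ∈ s, P x → P y := by
  intro x hx y hy
  refine hs.induction₂' (fun x y => P x → P y) ?_ ?_ hx hy
  · intro x hx
    rcases h x hx with h1 | h1
    · have h2 := h1.self_of_nhdsWithin hx
      filter_upwards [h1] with y hy using ⟨fun _ => hy, fun _ => h2⟩
    · have h2 := h1.self_of_nhdsWithin hx
      filter_upwards [h1] with y hy using ⟨fun h => absurd h h2, fun h => absurd h hy⟩
  · intro x y z _ _ _ h1 h2 h3
    exact h2 (h1 h3)

lemma Icc_ind {A : Set ℝ} (hA : IsClosed A) (h0 : (0:ℝ) ∈ A)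
    (h : ∀ T ≥ 0, Icc 0 T ⊆ A → A ∈ nhds T) {T : ℝ} (hT : 0 ≤ T) : T ∈ A := by
  let K : Set ℝ := {T | ∀ s ∈ Icc (0:ℝ) 1, s * T ∈ A}
  have hK : ∀ T, 0 ≤ T → (T ∈ K ↔ Icc 0 T ⊆ A) := by
    intro T hT
    constructor
    · intro h s hs
      rcases hT.eq_or_lt with h0' | h0'
      · have : s = 0 := by rw [← h0'] at hs; simpa using hs
        rw [this]; exact h0
      · have := h (s / T) ⟨div_nonneg hs.1 hT, (div_le_one h0').mpr hs.2⟩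
        rwa [div_mul_cancel₀ _ h0'.ne'] at this
    · intro h s hs
      exact h ⟨mul_nonneg hs.1 hT, mul_le_of_le_one_left hT hs.2⟩
  have hKcl : IsClosed K := by
    have : K = ⋂ s ∈ Icc (0:ℝ) 1, {T | s * T ∈ A} := by
      ext T; simp [K]
    rw [this]
    refine isClosed_biInter (fun s _ => ?_)
    exact hA.preimage (by fun_prop)
  have hmain : Icc 0 T ⊆ K := by
    apply IsClosed.Icc_subset_of_forall_mem_nhdsWithin (hKcl.inter isClosed_Icc)
    · rw [hK 0 le_rfl]
      intro s hs
      have : s = 0 := by simpa using hs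
      rw [this]; exact h0
    · rintro T ⟨hTK, hT⟩
      have h1 := (hK T hT.1).mp hTK
      obtain ⟨e, he, h5⟩ := Metric.mem_nhds_iff.mp (h T hT.1 h1)
      have : Ioo T (T + e) ∈ nhdsWithin T (Ioi T) := Ioo_mem_nhdsGT (by linarith)
      refine Filter.mem_of_superset this ?_
      intro T' hT'
      rw [hK T' (hT.1.trans hT'.1.le)]
      intro s hs
      rcases le_or_gt s T with h | h
      · exact h1 ⟨hs.1, h⟩
      · apply h5
        rw [mem_ball, Real.dist_eq, abs_lt]
        constructor <;> linarith [hs.2, hT'.2]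
  exact (hK T hT).mp (hmain ⟨hT, le_rfl⟩) ⟨hT, le_rfl⟩

lemma IsBox.oe {m : ℕ} [ChartedSpace (EuclideanSpace ℝ (Fin (m+1))) M] {S U : M → M → Prop} {x : M}
    {φ : ℝ × (Fin m → ℝ) → M} (h : IsBox S U m x φ) : Topology.IsOpenEmbedding φ :=
  openEmb_of_inj (n := m + 1) (by simp; ring) φ h.1 h.2.1

lemma IsBox.recentre {m : ℕ} {S U : M → M → Prop} {x : M}
    {φ : ℝ × (Fin m → ℝ) → M} (h : IsBox S U m x φ) (a : ℝ × (Fin m → ℝ)) :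
    IsBox S U m (φ a) (fun b => φ (b + a)) := by
  obtain ⟨h1, h2, h3, h4, h5⟩ := h
  refine ⟨h1.comp (by fun_prop), fun b c hbc => by simpa using h2 hbc, by simp, ?_, ?_⟩
  · intro b c; rw [h4]; simp
  · intro b c; rw [h5]; simp

/-- a box at `x` adapted to the set `Θ` -/
def AdBox (S U : M → M → Prop) (m : ℕ) (p : M) (r0 : ℝ) (Θ : Set M) (x : M)
    (φ : ℝ × (Fin m → ℝ) → M) (I : Set ℝ) : Prop :=
  IsBox S U m x φ ∧ range φ ⊆ ball p r0 \ {p} ∧ I.OrdConnected ∧ φ ⁻¹' Θ = {a | a.1 ∈ I}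

lemma AdBox.recentre {m : ℕ} {S U : M → M → Prop} {p x : M} {r0 : ℝ} {Θ : Set M} {I : Set ℝ}
    {φ : ℝ × (Fin m → ℝ) → M} (h : AdBox S U m p r0 Θ x φ I) (a : ℝ × (Fin m → ℝ)) :
    ∃ φ' I', AdBox S U m p r0 Θ (φ a) φ' I' := by
  obtain ⟨h1, h2, h3, h4⟩ := h
  refine ⟨_, (fun t => t + a.1) ⁻¹' I, h1.recentre a, ?_, ?_, ?_⟩
  · rintro _ ⟨b, rfl⟩; exact h2 (mem_range_self _)
  · exact h3.preimage_mono (fun s t hst => by simpa using hst)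
  · ext b
    have : b + a ∈ φ ⁻¹' Θ ↔ (b + a).1 ∈ I := by rw [h4]; rfl
    exact this

lemma tube_half {m : ℕ} [ChartedSpace (EuclideanSpace ℝ (Fin (m+1))) M] {S U : M → M → Prop}
    {x w : M} {ψ : ℝ × (Fin m → ℝ) → M} (hψ : IsBox S U m x ψ) {t0 : ℝ} (hw : w = ψ (t0, 0)) (ht : |t0| ≤ 1) :
    ∃ O ∈ nhds w, ∀ φ, IsBox S U m w φ → range φ ⊆ O →
      ∃ I : Set ℝ, I.OrdConnected ∧ (0:ℝ) ∈ I ∧ φ ⁻¹' (ψ '' closedBall 0 1) = {a | a.1 ∈ I} := by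
  have ho := hψ.oe
  refine ⟨ψ '' (univ ×ˢ ball 0 1), ?_, ?_⟩
  · refine (ho.isOpenMap _ (isOpen_univ.prod isOpen_ball)).mem_nhds ?_
    rw [hw]; exact mem_image_of_mem _ (by simp)
  · intro φ hφ hr
    let e := ho.toOpenPartialHomeomorph ψ
    have hes : ∀ a, e.symm (ψ a) = a := fun a => ho.toOpenPartialHomeomorph_left_inv ψ
    have hsymm : ContinuousOn e.symm (range ψ) := by
      have := e.continuousOn_symm
      simpa [e] using this
    have hform : ∀ a, φ a = ψ (e.symm (φ a)) ∧ (e.symm (φ a)).2 ∈ ball (0 : Fin m → ℝ) 1 := by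
      intro a
      obtain ⟨b, hb, hba⟩ := hr (mem_range_self a)
      rw [← hba, hes]
      exact ⟨rfl, hb.2⟩
    have hdep : ∀ a b, (e.symm (φ a)).1 = (e.symm (φ b)).1 ↔ a.1 = b.1 := by
      intro a b
      rw [← hφ.2.2.2.1 a b, (hform a).1, (hform b).1, hψ.2.2.2.1, hes, hes]
    let g : ℝ → ℝ := fun t => (e.symm (φ (t, 0))).1
    have hgc : Continuous g := by
      have : Continuous fun t : ℝ => e.symm (φ (t, 0)) :=
        hsymm.comp_continuous (hφ.1.comp (by fun_prop)) (fun t => by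
          rw [(hform (t, 0)).1]; exact mem_range_self _)
      exact continuous_fst.comp this
    have hgi : Function.Injective g := fun s t hst => (hdep (s, 0) (t, 0)).mp hst
    have hg0 : g 0 = t0 := by
      have : φ (0, 0) = ψ (t0, 0) := by rw [← hw]; exact hφ.2.2.1
      simp only [g, this, hes]
    refine ⟨g ⁻¹' Icc (-1) 1, ?_, ?_, ?_⟩
    · rcases hgc.strictMono_of_inj hgi with h | h
      · exact ordConnected_Icc.preimage_mono h.monotone
      · exact ordConnected_Icc.preimage_anti h.antitone
    · show g 0 ∈ Icc (-1:ℝ) 1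
      rw [hg0]; exact abs_le.mp ht
    · ext a
      have hga : g a.1 = (e.symm (φ a)).1 := (hdep (a.1, 0) a).mpr rfl
      show φ a ∈ ψ '' closedBall 0 1 ↔ g a.1 ∈ Icc (-1) 1
      rw [hga, mem_Icc, ← abs_le]
      constructor
      · rintro ⟨b, hb, hba⟩
        rw [← hba, hes]
        rw [mem_closedBall_zero_iff, Prod.norm_def, max_le_iff] at hb
        exact hb.1
      · intro h
        refine ⟨e.symm (φ a), ?_, (hform a).1.symm⟩
        rw [mem_closedBall_zero_iff, Prod.norm_def, max_le_iff]
        have := (hform a).2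
        rw [mem_ball_zero_iff] at this
        exact ⟨h, this.le⟩

lemma exists_theta [CompactSpace M] {m : ℕ} [ChartedSpace (EuclideanSpace ℝ (Fin (m+1))) M]
    {S U : M → M → Prop} {p : M} {r0 : ℝ} {D : Set M} (L : LocSet S U m p r0 D) :
    ∃ Θ r1, 0 < r1 ∧ IsClosed Θ ∧ Θ ⊆ ball p r0 ∧ ball p r1 ⊆ Θ ∧
      ∀ w ∈ Θ, U p w → w ∈ interior Θ ∨ ∃ φ I, AdBox S U m p r0 Θ w φ I := by
  have hr0 := L.pos
  obtain ⟨r1, hr1⟩ : ∃ r1, r1 = r0 / 2 := ⟨_, rfl⟩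
  have hr1p : 0 < r1 := by linarith
  have hpB : p ∈ closedBall p r0 := mem_closedBall_self hr0.le
  let C : Set M := {x | x ∈ sphere p r1 ∧ U p x}
  have hCc : IsCompact C := by
    apply IsClosed.isCompact
    apply IsClosed.inter isClosed_sphere
    exact L.Ucl.preimage (f := fun x => (p, x)) (by fun_prop)
  have hC : ∀ x : C, ∃ ψ, IsBox S U m x.1 ψ ∧ range ψ ⊆ ball p r0 := by
    rintro ⟨x, hx, hpx⟩
    rw [mem_sphere] at hx
    have hxb : x ∈ ball p r0 := by rw [mem_ball]; linarith
    exact L.box x hxb (by rintro rfl; simp at hx; linarith) _ (isOpen_ball.mem_nhds hxb)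
  choose ψ hψ hψr using hC
  obtain ⟨t, ht⟩ := hCc.elim_nhds_subcover' (fun x hx => ψ ⟨x, hx⟩ '' ball 0 1) (fun x hx => by
    refine ((hψ ⟨x, hx⟩).oe.isOpenMap _ isOpen_ball).mem_nhds ?_
    have := (hψ ⟨x, hx⟩).2.2.1
    exact ⟨0, by simp, this⟩)
  let Θk : C → Set M := fun k => ψ k '' closedBall 0 1
  have hΘk : ∀ k, IsClosed (Θk k) := fun k => ((isCompact_closedBall _ _).image (hψ k).1).isClosed
  let Θ : Set M := closedBall p r1 ∪ ⋃ k ∈ t, Θk k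
  have hΘcl : IsClosed Θ := isClosed_closedBall.union (isClosed_biUnion_finset (fun k _ => hΘk k))
  refine ⟨Θ, r1, hr1p, hΘcl, ?_, ?_, ?_⟩
  · apply union_subset (closedBall_subset_ball (by linarith))
    apply iUnion₂_subset
    rintro k _ _ ⟨a, _, rfl⟩
    exact hψr k (mem_range_self _)
  · exact ball_subset_closedBall.trans subset_union_left
  · intro w hw hpw
    by_cases hwi : w ∈ interior Θ
    · exact Or.inl hwi
    right
    have hw1 : w ∉ closedBall p r1 := by
      intro h
      apply hwi
      rcases (mem_closedBall.mp h).lt_or_eq with h1 | h1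
      · exact interior_maximal (ball_subset_closedBall.trans subset_union_left) isOpen_ball h1
      · have hwC : w ∈ C := ⟨h1, hpw⟩
        obtain ⟨k, hk, hwk⟩ := mem_iUnion₂.mp (ht hwC)
        refine interior_maximal (t := ψ k '' ball 0 1) ?_ ((hψ k).oe.isOpenMap _ isOpen_ball) hwk
        refine Subset.trans ?_ subset_union_right
        refine Subset.trans (image_mono ball_subset_closedBall) ?_
        exact subset_biUnion_of_mem (u := Θk) hk
    have hwb : w ∈ ball p r0 := by
      rcases hw with h | h
      · exact absurd h hw1
      · obtain ⟨k, _, a, _, rfl⟩ := mem_iUnion₂.mp h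
        exact hψr k (mem_range_self _)
    have hO : ∀ k : C, ∃ O ∈ nhds w, ∀ φ, IsBox S U m w φ → range φ ⊆ O →
        ∃ I : Set ℝ, I.OrdConnected ∧ (I.Nonempty → (0:ℝ) ∈ I) ∧ φ ⁻¹' (Θk k) = {a | a.1 ∈ I} := by
      intro k
      by_cases hwk : w ∈ Θk k
      · obtain ⟨⟨t0, y⟩, ha, haw⟩ := hwk
        have hkb : k.1 ∈ closedBall p r0 := by
          have := (hψ k).2.2.1
          rw [← this]; exact ball_subset_closedBall (hψr k (mem_range_self _))
        have h1 : U k.1 w := L.Utrans _ hkb _ hpB _ (ball_subset_closedBall hwb) (L.Usymm _ _ k.2.2) hpw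
        have h2 : U (ψ k 0) (ψ k (t0, y)) := by rw [haw, (hψ k).2.2.1]; exact h1
        rw [(hψ k).2.2.2.2] at h2
        have h3 : y = 0 := h2.symm
        subst h3
        have h4 : |t0| ≤ 1 := by
          rw [mem_closedBall_zero_iff, Prod.norm_def, max_le_iff] at ha
          exact ha.1
        obtain ⟨O, hO, h5⟩ := tube_half (hψ k) haw.symm h4
        refine ⟨O, hO, fun φ hφ hr => ?_⟩
        obtain ⟨I, hI1, hI2, hI3⟩ := h5 φ hφ hr
        exact ⟨I, hI1, fun _ => hI2, hI3⟩
      · refine ⟨(Θk k)ᶜ, (hΘk k).isOpen_compl.mem_nhds hwk, fun φ hφ hr => ⟨∅, ordConnected_empty, by simp, ?_⟩⟩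
        ext a
        simp only [mem_empty_iff_false, mem_preimage]
        exact iff_of_false (hr (mem_range_self a)) (by simp)
    choose O hO1 hO2 using hO
    have hnb : (ball p r0 ∩ (closedBall p r1)ᶜ) ∩ ⋂ k ∈ t, O k ∈ nhds w := by
      refine Filter.inter_mem (Filter.inter_mem (isOpen_ball.mem_nhds hwb)
        (isClosed_closedBall.isOpen_compl.mem_nhds hw1)) ?_
      rw [Filter.biInter_finset_mem]
      exact fun k _ => hO1 k
    obtain ⟨φ, hφ, hφr⟩ := L.box w hwb (by rintro rfl; exact hw1 (mem_closedBall_self hr1p.le)) _ hnb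
    have hI : ∀ k : C, ∃ I : Set ℝ, k ∈ t → (I.OrdConnected ∧ (I.Nonempty → (0:ℝ) ∈ I) ∧
        φ ⁻¹' (Θk k) = {a | a.1 ∈ I}) := by
      intro k
      by_cases hk : k ∈ t
      · obtain ⟨I, hI⟩ := hO2 k φ hφ (hφr.trans (inter_subset_right.trans (biInter_subset_of_mem hk)))
        exact ⟨I, fun _ => hI⟩
      · exact ⟨∅, fun h => absurd h hk⟩
    choose I hI using hI
    refine ⟨φ, ⋃ k ∈ t, I k, hφ, ?_, ?_, ?_⟩
    · intro x hx
      refine ⟨(hφr hx).1.1, ?_⟩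
      rintro rfl
      exact (hφr hx).1.2 (mem_closedBall_self hr1p.le)
    · constructor
      intro x hx y hy z hz
      obtain ⟨k, hk, hxk⟩ := mem_iUnion₂.mp hx
      obtain ⟨l, hl, hyl⟩ := mem_iUnion₂.mp hy
      rcases le_total z 0 with h | h
      · exact mem_iUnion₂.mpr ⟨k, hk, (hI k hk).1.out hxk ((hI k hk).2.1 ⟨x, hxk⟩) ⟨hz.1, h⟩⟩
      · exact mem_iUnion₂.mpr ⟨l, hl, (hI l hl).1.out ((hI l hl).2.1 ⟨y, hyl⟩) hyl ⟨h, hz.2⟩⟩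
    · ext a
      show φ a ∈ Θ ↔ a.1 ∈ ⋃ k ∈ t, I k
      have h1 : φ a ∉ closedBall p r1 := (hφr (mem_range_self a)).1.2
      simp only [Θ, mem_union, h1, false_or, mem_iUnion]
      refine exists_congr (fun k => exists_congr (fun hk => ?_))
      have : a ∈ φ ⁻¹' (Θk k) ↔ a.1 ∈ I k := by rw [(hI k hk).2.2]; rfl
      exact this

/-- A2 -/
lemma theta_near [CompactSpace M] {m : ℕ} [ChartedSpace (EuclideanSpace ℝ (Fin (m+1))) M]
    {S U : M → M → Prop} {p : M} {r0 : ℝ} {D : Set M} (L : LocSet S U m p r0 D) {Θ : Set M}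
    (hΘ : IsClosed Θ)
    (h : ∀ w ∈ Θ, U p w → w ∈ interior Θ ∨ ∃ φ I, AdBox S U m p r0 Θ w φ I) :
    ∀ᶠ z in nhds p, ∀ x ∈ Θ, U z x → x ∈ interior Θ ∨
      ∃ w ∈ Θ, U p w ∧ ∃ φ I, AdBox S U m p r0 Θ w φ I ∧ x ∈ range φ := by
  let V : Set M := interior Θ ∪ ⋃₀ {O | ∃ w ∈ Θ, U p w ∧ ∃ φ I, AdBox S U m p r0 Θ w φ I ∧ O = range φ}
  have hV : IsOpen V := by
    apply isOpen_interior.union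
    apply isOpen_sUnion
    rintro _ ⟨w, _, _, φ, I, hφ, rfl⟩
    exact hφ.1.oe.isOpen_range
  have hc : IsCompact (Θ \ V) := (hΘ.sdiff hV).isCompact
  have h1 : ∀ x ∈ Θ \ V, ∀ᶠ a : M × M in nhds p ×ˢ nhds x, ¬ U a.1 a.2 := by
    rintro x ⟨hx, hxV⟩
    rw [← nhds_prod_eq]
    apply L.Ucl.isOpen_compl.mem_nhds
    intro hpx
    apply hxV
    rcases h x hx hpx with h2 | ⟨φ, I, h2⟩
    · exact Or.inl h2
    · exact Or.inr ⟨range φ, ⟨x, hx, hpx, φ, I, h2, rfl⟩, ⟨0, h2.1.2.2.1⟩⟩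
  have h2 : ∀ᶠ z in nhds p, ∀ x ∈ Θ \ V, ¬ U z x := by
    have := hc.eventually_forall_of_forall_eventually (P := fun z x => ¬ U z x) (x₀ := p) (by
      intro x hx
      have := h1 x hx
      rwa [← nhds_prod_eq] at this)
    exact this
  filter_upwards [h2] with z hz x hx hzx
  by_contra hcon
  apply hz x ⟨hx, ?_⟩ hzx
  rintro (h3 | ⟨_, ⟨w, hw, hpw, φ, I, hφ, rfl⟩, hxr⟩)
  · exact hcon (Or.inl h3)
  · exact hcon (Or.inr ⟨w, hw, hpw, φ, I, hφ, hxr⟩)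

lemma adbox_near {m : ℕ}
    {S U : M → M → Prop} {p : M} {r0 : ℝ} {D : Set M} (L : LocSet S U m p r0 D) {Θ : Set M}
    (hΘr : Θ ⊆ ball p r0) {x : M} (hxΘ : x ∈ Θ) (hxp : x ≠ p)
    (h : x ∈ interior Θ ∨ ∃ w ∈ Θ, U p w ∧ ∃ φ I, AdBox S U m p r0 Θ w φ I ∧ x ∈ range φ) :
    ∃ φ I, AdBox S U m p r0 Θ x φ I := by
  rcases h with h | ⟨w, _, _, φ, I, hφ, a, rfl⟩
  · obtain ⟨φ, hφ, hφr⟩ := L.box x (hΘr hxΘ) hxp (interior Θ ∩ {p}ᶜ)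
      (Filter.inter_mem (isOpen_interior.mem_nhds h) (isOpen_compl_singleton.mem_nhds hxp))
    refine ⟨φ, univ, hφ, ?_, ordConnected_univ, ?_⟩
    · intro y hy
      exact ⟨hΘr (interior_subset (hφr hy).1), (hφr hy).2⟩
    · ext a
      simp only [mem_preimage]
      exact iff_of_true (interior_subset (hφr (mem_range_self a)).1) (mem_univ a.1)
  · exact hφ.recentre a

/-- the unstable plaque of `z` in `Θ` reaches the stable set of `q` -/
def Hit (S U : M → M → Prop) (Θ : Set M) (q z : M) : Prop :=
  ∃ K, IsPreconnected K ∧ z ∈ K ∧ (∀ x ∈ K, x ∈ Θ ∧ U z x) ∧ ∃ y ∈ K, S q y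

lemma hit_closed [CompactSpace M] {S U : M → M → Prop} {Θ : Set M} {q : M}
    (hS : IsClosed {a : M × M | S a.1 a.2}) (hU : IsClosed {a : M × M | U a.1 a.2})
    (hΘ : IsClosed Θ) : IsClosed {z | Hit S U Θ q z} := by
  rw [isClosed_iff_ultrafilter]
  intro z F hF hH
  have hch : ∀ z' : M, ∃ K : Set M, ∃ y : M, Hit S U Θ q z' →
      (IsPreconnected K ∧ z' ∈ K ∧ (∀ x ∈ K, x ∈ Θ ∧ U z' x) ∧ y ∈ K ∧ S q y) := by
    intro z'
    by_cases h : Hit S U Θ q z'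
    · obtain ⟨K, h1, h2, h3, y, h4, h5⟩ := h
      exact ⟨K, y, fun _ => ⟨h1, h2, h3, h4, h5⟩⟩
    · exact ⟨∅, z', fun h' => absurd h' h⟩
  choose K y hK using hch
  have hKF : ∀ᶠ z' in (F : Filter M), IsPreconnected (K z') ∧ z' ∈ K z' ∧
      (∀ x ∈ K z', x ∈ Θ ∧ U z' x) ∧ y z' ∈ K z' ∧ S q (y z') := by
    filter_upwards [hH] with z' hz' using hK z' hz'
  let Ki : Set M := {x | ∀ O, IsOpen O → x ∈ O → ∀ᶠ z' in (F : Filter M), (K z' ∩ O).Nonempty}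
  have hlim : ∀ k : M → M, (∀ᶠ z' in (F : Filter M), k z' ∈ K z') →
      ∃ x, Filter.Tendsto k F (nhds x) ∧ x ∈ Ki := by
    intro k hk
    obtain ⟨x, -, hx⟩ := isCompact_univ.ultrafilter_le_nhds (F.map k) (by simp)
    have hx' : Filter.Tendsto k F (nhds x) := hx
    refine ⟨x, hx', fun O hO hxO => ?_⟩
    filter_upwards [hk, hx'.eventually (hO.mem_nhds hxO)] with z' h1 h2 using ⟨k z', h1, h2⟩
  have hKcl : IsClosed Ki := by
    rw [← isOpen_compl_iff, isOpen_iff_forall_mem_open]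
    intro x hx
    simp only [Ki, mem_compl_iff] at hx
    change ¬ (∀ O, IsOpen O → x ∈ O → ∀ᶠ z' in (F : Filter M), (K z' ∩ O).Nonempty) at hx
    push Not at hx
    obtain ⟨O, hO, hxO, hn⟩ := hx
    refine ⟨O, fun x' hx' h => ?_, hO, hxO⟩
    obtain ⟨z', h1, h2⟩ := (hn.and (h O hO hx')).exists
    exact h2.ne_empty h1
  have hzK : z ∈ Ki := by
    intro O hO hzO
    filter_upwards [hKF, hF (hO.mem_nhds hzO)] with z' h1 h2 using ⟨z', h1.2.1, h2⟩
  refine ⟨Ki, ?_, hzK, ?_, ?_⟩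
  · rw [isPreconnected_iff_subset_of_fully_disjoint_closed hKcl]
    have key : ∀ u v : Set M, IsClosed u → IsClosed v → Ki ⊆ u ∪ v → Disjoint u v → z ∈ u → Ki ⊆ u := by
      intro u v hu hv huv hd hzu
      obtain ⟨A, B, hA, hB, huA, hvB, hAB⟩ := normal_separation hu hv hd
      have hsub : ∀ᶠ z' in (F : Filter M), K z' ⊆ A ∪ B := by
        by_contra hcon
        rw [← Ultrafilter.eventually_not] at hcon
        have : ∀ z' : M, ∃ k : M, ¬ (K z' ⊆ A ∪ B) → k ∈ K z' ∧ k ∉ A ∪ B := by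
          intro z'
          by_cases h : K z' ⊆ A ∪ B
          · exact ⟨z', fun h' => absurd h h'⟩
          · obtain ⟨k, hk⟩ := not_subset.mp h
            exact ⟨k, fun _ => hk⟩
        choose k hk using this
        obtain ⟨x, hx, hxK⟩ := hlim k (by filter_upwards [hcon] with z' h using (hk z' h).1)
        have hxAB : x ∈ A ∪ B := (union_subset_union huA hvB) (huv hxK)
        have h1 := hx.eventually ((hA.union hB).mem_nhds hxAB)
        obtain ⟨z', h2, h3⟩ := (h1.and hcon).exists
        exact (hk z' h3).2 h2
      have hsubA : ∀ᶠ z' in (F : Filter M), K z' ⊆ A := by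
        filter_upwards [hsub, hKF, hF (hA.mem_nhds (huA hzu))] with z' h1 h2 h3
        exact h2.1.subset_left_of_subset_union hA hB hAB h1 ⟨z', h2.2.1, h3⟩
      intro x hx
      rcases huv hx with h | h
      · exact h
      · exfalso
        have h1 := hx B hB (hvB h)
        obtain ⟨z', ⟨k, hk1, hk2⟩, h3⟩ := (h1.and hsubA).exists
        exact disjoint_left.mp hAB (h3 hk1) hk2
    intro u v hu hv huv hd
    rcases huv hzK with h | h
    · exact Or.inl (key u v hu hv huv hd h)
    · exact Or.inr (key v u hv hu (by rwa [union_comm]) hd.symm h)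
  · intro x hx
    constructor
    · by_contra hcon
      obtain ⟨z', ⟨k, hk1, hk2⟩, h3⟩ := ((hx _ hΘ.isOpen_compl hcon).and hKF).exists
      exact hk2 (h3.2.2.1 k hk1).1
    · by_contra hcon
      have h1 : {a : M × M | U a.1 a.2}ᶜ ∈ nhds (z, x) := hU.isOpen_compl.mem_nhds hcon
      obtain ⟨A, B, hA, hzA, hB, hxB, hAB⟩ := mem_nhds_prod_iff'.mp h1
      have h2 : ∀ᶠ z' in (F : Filter M), z' ∈ A := hF (hA.mem_nhds hzA)
      obtain ⟨z', ⟨⟨k, hk1, hk2⟩, h3⟩, h4⟩ := (((hx B hB hxB).and hKF).and h2).exists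
      exact hAB (mk_mem_prod h4 hk2) (h3.2.2.1 k hk1).2
  · obtain ⟨x, hx, hxK⟩ := hlim y (by filter_upwards [hKF] with z' h using h.2.2.2.1)
    refine ⟨x, hxK, ?_⟩
    have h1 : IsClosed {x | S q x} := hS.preimage (f := fun x => (q, x)) (by fun_prop)
    exact h1.mem_of_tendsto hx (by filter_upwards [hKF] with z' h using h.2.2.2.2)

lemma box_eventually {m : ℕ} [ChartedSpace (EuclideanSpace ℝ (Fin (m+1))) M] {S U : M → M → Prop} {x : M}
    {φ : ℝ × (Fin m → ℝ) → M} (h : IsBox S U m x φ) (a : ℝ × (Fin m → ℝ)) (P : M → Prop) :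
    (∀ᶠ z in nhds (φ a), P z) ↔ ∀ᶠ b in nhds a, P (φ b) := by
  rw [← h.oe.map_nhds_eq, Filter.eventually_map]

lemma hit_open {m : ℕ} [ChartedSpace (EuclideanSpace ℝ (Fin (m+1))) M]
    {S U : M → M → Prop} {p : M} {r0 : ℝ} {D : Set M} (L : LocSet S U m p r0 D) {Θ : Set M}
    (hΘr : Θ ⊆ ball p r0) {q z : M} (hq : q ∈ closedBall p r0)
    (hgood : ∀ x ∈ Θ, U z x → ∃ φ I, AdBox S U m p r0 Θ x φ I) (hz : Hit S U Θ q z) :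
    ∀ᶠ z' in nhds z, z' ∈ Θ → Hit S U Θ q z' := by
  obtain ⟨K, hKc, hzK, hK, y, hyK, hqy⟩ := hz
  let G : M → Prop := fun x => ∀ᶠ z' in nhds x, z' ∈ Θ → Hit S U Θ q z'
  have hB : ∀ x ∈ Θ, x ∈ closedBall p r0 := fun x hx => ball_subset_closedBall (hΘr hx)
  have arc : ∀ (φ : ℝ × (Fin m → ℝ) → M) (I : Set ℝ), IsBox S U m (φ 0) φ → I.OrdConnected →
      ∀ v : Fin m → ℝ, IsPreconnected (φ '' (I ×ˢ {v})) := by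
    intro φ I hφ hI v
    exact (hI.isPreconnected.prod isPreconnected_singleton).image _ hφ.1.continuousOn
  have key : ∀ x ∈ K, ∀ x' ∈ K, ∀ φ I, AdBox S U m p r0 Θ x φ I → x' ∈ range φ →
      (G x → G x') ∧ (G x' → G x) := by
    rintro x hx x' hx' φ I ⟨hφ, hφr, hI, hφΘ⟩ ⟨⟨t', y'⟩, rfl⟩
    have hΘiff : ∀ a, φ a ∈ Θ ↔ a.1 ∈ I := fun a => by
      have : a ∈ φ ⁻¹' Θ ↔ a.1 ∈ I := by rw [hφΘ]; rfl
      exact this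
    have hφ0 := hφ.2.2.1
    have hzB := hB z (hK z hzK).1
    have h1 : U x (φ (t', y')) := L.Utrans _ (hB _ (hK x hx).1) _ hzB _ (hB _ (hK _ hx').1)
      (L.Usymm _ _ (hK x hx).2) (hK _ hx').2
    rw [← hφ0, hφ.2.2.2.2] at h1
    have h2 : y' = 0 := h1.symm
    subst h2
    have ht' : t' ∈ I := (hΘiff _).mp (hK _ hx').1
    have h0I : (0:ℝ) ∈ I := (hΘiff 0).mp (by rw [hφ0]; exact (hK x hx).1)
    have main : ∀ t1 ∈ I, ∀ t2 ∈ I, G (φ (t1, 0)) → G (φ (t2, 0)) := by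
      intro t1 ht1 t2 ht2 hG
      simp only [G] at hG ⊢
      rw [box_eventually hφ] at hG ⊢
      have hcc : Continuous fun b : ℝ × (Fin m → ℝ) => ((t1, b.2) : ℝ × (Fin m → ℝ)) := by fun_prop
      have h3 : Filter.Tendsto (fun b : ℝ × (Fin m → ℝ) => ((t1, b.2) : ℝ × (Fin m → ℝ)))
          (nhds (t2, 0)) (nhds (t1, 0)) := hcc.tendsto' _ _ rfl
      filter_upwards [h3.eventually hG] with b hb hbΘ
      obtain ⟨K', hK'c, hzK', hK', y', hy'K, hqy'⟩ := hb ((hΘiff _).mpr ht1)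
      have hUb : U (φ b) (φ (t1, b.2)) := (hφ.2.2.2.2 _ _).mpr rfl
      refine ⟨K' ∪ φ '' (I ×ˢ {b.2}), ?_, ?_, ?_, y', Or.inl hy'K, hqy'⟩
      · refine IsPreconnected.union (φ (t1, b.2)) hzK' ?_ hK'c (arc φ I (by rw [hφ0]; exact hφ) hI _)
        exact mem_image_of_mem _ ⟨ht1, rfl⟩
      · right; exact ⟨b, ⟨(hΘiff _).mp hbΘ, rfl⟩, rfl⟩
      · rintro w (hw | ⟨⟨s, v⟩, ⟨hs, hv⟩, rfl⟩)
        · refine ⟨(hK' w hw).1, ?_⟩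
          exact L.Utrans _ (hB _ hbΘ) _ (hB _ ((hΘiff _).mpr ht1)) _ (hB _ (hK' w hw).1) hUb (hK' w hw).2
        · exact ⟨(hΘiff _).mpr hs, (hφ.2.2.2.2 _ _).mpr hv.symm⟩
    have hx0 : x = φ (0, 0) := hφ0.symm
    rw [hx0]
    exact ⟨main 0 h0I t' ht', main t' ht' 0 h0I⟩
  have hGy : G y := by
    obtain ⟨φ, I, hφ, hφr, hI, hφΘ⟩ := hgood y (hK y hyK).1 (hK y hyK).2
    have hΘiff : ∀ a, φ a ∈ Θ ↔ a.1 ∈ I := fun a => by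
      have : a ∈ φ ⁻¹' Θ ↔ a.1 ∈ I := by rw [hφΘ]; rfl
      exact this
    have hφ0 := hφ.2.2.1
    have h0I : (0:ℝ) ∈ I := (hΘiff 0).mp (by rw [hφ0]; exact (hK y hyK).1)
    simp only [G]
    rw [← hφ0, box_eventually hφ]
    refine Filter.Eventually.of_forall (fun b hb => ?_)
    refine ⟨φ '' (I ×ˢ {b.2}), arc φ I (by rw [hφ0]; exact hφ) hI _, ⟨b, ⟨(hΘiff _).mp hb, rfl⟩, rfl⟩, ?_,
      φ (0, b.2), ⟨(0, b.2), ⟨h0I, rfl⟩, rfl⟩, ?_⟩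
    · rintro _ ⟨⟨s, v⟩, ⟨hs, hv⟩, rfl⟩
      exact ⟨(hΘiff _).mpr hs, (hφ.2.2.2.2 _ _).mpr hv.symm⟩
    · have h1 : S y (φ (0, b.2)) := by
        rw [← hφ0, hφ.2.2.2.1]; rfl
      exact L.Strans _ hq _ (hB _ (hK y hyK).1) _ (hB _ ((hΘiff _).mpr h0I)) hqy h1
  refine prec_const hKc G ?_ y hyK z hzK hGy
  intro x hx
  obtain ⟨φ, I, hφ⟩ := hgood x (hK x hx).1 (hK x hx).2
  have hnb : range φ ∈ nhds x := hφ.1.oe.isOpen_range.mem_nhds ⟨0, hφ.1.2.2.1⟩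
  by_cases hGx : G x
  · left
    filter_upwards [mem_nhdsWithin_of_mem_nhds hnb, self_mem_nhdsWithin] with x' h1 h2
    exact (key x hx x' h2 φ I hφ h1).1 hGx
  · right
    filter_upwards [mem_nhdsWithin_of_mem_nhds hnb, self_mem_nhdsWithin] with x' h1 h2
    exact fun h => hGx ((key x hx x' h2 φ I hφ h1).2 h)

lemma punctured_nhd {m : ℕ} (hm : 1 ≤ m) [ChartedSpace (EuclideanSpace ℝ (Fin (m+1))) M] (p : M)
    {N : Set M} (hN : N ∈ nhds p) :
    ∃ B : Set M, IsOpen B ∧ p ∈ B ∧ B ⊆ N ∧ IsPreconnected (B \ {p}) := by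
  let e := chartAt (EuclideanSpace ℝ (Fin (m+1))) p
  have hp : p ∈ e.source := mem_chart_source _ p
  have h1 : e.target ∩ e.symm ⁻¹' N ∈ nhds (e p) := by
    refine Filter.inter_mem (e.open_target.mem_nhds (e.map_source hp)) ?_
    apply (e.continuousAt_symm (e.map_source hp))
    rw [e.left_inv hp]; exact hN
  obtain ⟨r, hr, hrs⟩ := Metric.mem_nhds_iff.mp h1
  let b := OpenPartialHomeomorph.univBall (e p) r
  have hb : ∀ v, b v ∈ ball (e p) r := by
    intro v
    have := b.map_source (x := v) (by simp [b])
    rwa [OpenPartialHomeomorph.univBall_target _ hr] at this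
  let ψ : EuclideanSpace ℝ (Fin (m+1)) → M := fun v => e.symm (b v)
  have hψc : Continuous ψ :=
    e.continuousOn_symm.comp_continuous (OpenPartialHomeomorph.continuous_univBall _ _) (fun v => (hrs (hb v)).1)
  have hψi : Function.Injective ψ := by
    intro v w hvw
    have h2 := e.symm.injOn (hrs (hb v)).1 (hrs (hb w)).1 hvw
    exact b.injOn (by simp [b]) (by simp [b]) h2
  have hψ0 : ψ 0 = p := by
    simp only [ψ, b, OpenPartialHomeomorph.univBall_apply_zero]
    exact e.left_inv hp
  have hoe := openEmb_of_inj (n := m + 1) (by simp) ψ hψc hψi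
  refine ⟨range ψ, hoe.isOpen_range, ⟨0, hψ0⟩, ?_, ?_⟩
  · rintro _ ⟨v, rfl⟩; exact (hrs (hb v)).2
  · have h3 : range ψ \ {p} = ψ '' {0}ᶜ := by
      rw [image_compl_eq_range_sdiff_image hψi, image_singleton, hψ0]
    rw [h3]
    apply IsPreconnected.image _ _ hψc.continuousOn
    apply (isConnected_compl_singleton_of_one_lt_rank _ _).isPreconnected
    rw [← Module.finrank_eq_rank]
    simp; omega

lemma X_thin {m : ℕ} (hm : 1 ≤ m) {S U : M → M → Prop} {p : M} {r0 : ℝ} {D : Set M}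
    (L : LocSet S U m p r0 D) {x : M} (hx : x ∈ ball p r0) (hxp : x ≠ p) :
    ¬ ∀ᶠ z in nhds x, U p z := by
  intro h
  obtain ⟨φ, hφ, hr⟩ := L.box x hx hxp _ (Filter.inter_mem h (isOpen_ball.mem_nhds hx))
  have hb : ∀ a, φ a ∈ closedBall p r0 := fun a => ball_subset_closedBall (hr (mem_range_self a)).2
  have h1 : U (φ 0) (φ (0, fun _ => 1)) := L.Utrans _ (hb _) p (mem_closedBall_self L.pos.le) _ (hb _)
    (L.Usymm _ _ (hr (mem_range_self _)).1) (hr (mem_range_self _)).1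
  rw [hφ.2.2.2.2] at h1
  have := congrFun h1 ⟨0, hm⟩
  simp at this

lemma stepA [CompactSpace M] {m : ℕ} (hm : 2 ≤ m) [ChartedSpace (EuclideanSpace ℝ (Fin (m+1))) M]
    {S U : M → M → Prop} {p : M} {r0 : ℝ} {D : Set M} (L : LocSet S U m p r0 D) :
    ∃ q ∈ ball p r0, q ≠ p ∧ U p q ∧ ∀ᶠ z in nhds p, ∃ x ∈ closedBall p r0, S q x ∧ U z x := by
  obtain ⟨Θ, r1, hr1, hΘ, hΘr, hr1Θ, hΘb⟩ := exists_theta L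
  have hΘB : Θ ⊆ closedBall p r0 := hΘr.trans ball_subset_closedBall
  have hnear := theta_near L hΘ hΘb
  have hΘn : Θ ∈ nhds p := Filter.mem_of_superset (ball_mem_nhds p hr1) hr1Θ
  obtain ⟨B, hBo, hpB, hBN, hBc⟩ := punctured_nhd (m := m) (by omega) p (Filter.inter_mem hnear hΘn)
  have hBΘ : B ⊆ Θ := fun z hz => (hBN hz).2
  have hBr : B ⊆ ball p r0 := hBΘ.trans hΘr
  have hpcl : p ∈ closedBall p r0 := mem_closedBall_self L.pos.le
  let X : Set M := {x | U p x}
  have hX : IsClosed X := L.Ucl.preimage (f := fun x => (p, x)) (by fun_prop)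
  -- good points
  have hgood : ∀ z ∈ B, z ∉ X → ∀ x ∈ Θ, U z x → ∃ φ I, AdBox S U m p r0 Θ x φ I := by
    intro z hz hzX x hx hzx
    refine adbox_near L hΘr hx ?_ ((hBN hz).1 x hx hzx)
    rintro rfl
    exact hzX (L.Usymm _ _ hzx)
  -- find q
  have hWne : (B \ {p}).Nonempty := by
    by_contra hcon
    rw [not_nonempty_iff_eq_empty, sdiff_eq_empty] at hcon
    have h1 : B = {p} := Subset.antisymm hcon (singleton_subset_iff.mpr hpB)
    have h2 : IsOpen ({p} : Set M) := h1 ▸ hBo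
    let e := chartAt (EuclideanSpace ℝ (Fin (m+1))) p
    have h3 := e.isOpen_image_of_subset_source h2 (singleton_subset_iff.mpr (mem_chart_source _ p))
    rw [image_singleton] at h3
    exact not_isOpen_singleton (e p) h3
  have hdenseX : ∀ x ∈ B, x ≠ p → ∀ O ∈ nhds x, ∃ z ∈ O, z ∈ B ∧ z ∉ X := by
    intro x hx hxp O hO
    by_contra hcon
    push Not at hcon
    apply X_thin (by omega) L (hBr hx) hxp
    filter_upwards [hO, hBo.mem_nhds hx] with z h1 h2 using hcon z h1 h2
  obtain ⟨x0, hx0B, hx0p⟩ := hWne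
  obtain ⟨z1, -, hz1B, hz1X⟩ := hdenseX x0 hx0B hx0p univ Filter.univ_mem
  obtain ⟨z0, hz0, hz0D⟩ := L.dense.exists_mem_open (hBo.inter hX.isOpen_compl) ⟨z1, hz1B, hz1X⟩
  obtain ⟨hz0B, hz0X⟩ := hz0D
  obtain ⟨c, T, hT, hcc, hc0, hcU, hcT⟩ := L.arc z0 hz0 (hΘB (hBΘ hz0B))
  obtain ⟨s, hs0, hsI, hsn⟩ : ∃ s ≥ 0, Icc 0 s ⊆ c ⁻¹' Θ ∧ c s ∉ interior Θ := by
    by_contra hcon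
    push Not at hcon
    apply hcT
    apply hΘB
    refine Icc_ind (A := c ⁻¹' Θ) (hΘ.preimage hcc) ?_ ?_ hT
    · show c 0 ∈ Θ
      rw [hc0]; exact hBΘ hz0B
    · intro s hs hsI
      exact hcc.continuousAt (mem_interior_iff_mem_nhds.mp (hcon s hs hsI))
  have hsT : s ≤ T := by
    by_contra hlt
    push Not at hlt
    exact hcT (hΘB (hsI ⟨hT, hlt.le⟩))
  have hcsΘ : c s ∈ Θ := hsI ⟨hs0, le_rfl⟩
  rcases (hBN hz0B).1 (c s) hcsΘ (hcU s ⟨hs0, hsT⟩) with h | ⟨w, hwΘ, hpw, φ, I, hφ, ⟨⟨t, v⟩, hts⟩⟩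
  · exact absurd h hsn
  let q := φ (t, 0)
  have hqr := hφ.2.1 (mem_range_self (t, 0))
  have hqB : q ∈ closedBall p r0 := ball_subset_closedBall hqr.1
  have hwq : U w q := by
    have h1 : U (φ 0) (φ (t, 0)) := (hφ.1.2.2.2.2 _ _).mpr rfl
    rwa [hφ.1.2.2.1] at h1
  have hpq : U p q := L.Utrans _ hpcl _ (hΘB hwΘ) _ hqB hpw hwq
  have hqs : S q (c s) := by
    rw [← hts]; exact (hφ.1.2.2.2.1 _ _).mpr rfl
  let H : M → Prop := Hit S U Θ q
  have hHz0 : H z0 := by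
    refine ⟨c '' Icc 0 s, isPreconnected_Icc.image _ hcc.continuousOn, ⟨0, ⟨le_rfl, hs0⟩, hc0⟩, ?_,
      c s, ⟨s, ⟨hs0, le_rfl⟩, rfl⟩, hqs⟩
    rintro _ ⟨s', hs', rfl⟩
    exact ⟨hsI hs', hcU s' ⟨hs'.1, hs'.2.trans hsT⟩⟩
  have hHcl : IsClosed {z | H z} := hit_closed L.Scl L.Ucl hΘ
  have hloc : ∀ z ∈ B, z ∉ X → (∀ᶠ z' in nhds z, H z') ∨ (∀ᶠ z' in nhds z, ¬ H z') := by
    intro z hz hzX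
    by_cases hH : H z
    · left
      filter_upwards [hit_open L hΘr hqB (hgood z hz hzX) hH, hBo.mem_nhds hz] with z' h1 h2
      exact h1 (hBΘ h2)
    · right
      exact hHcl.isOpen_compl.mem_nhds hH
  let A : M → Prop := fun x => ∀ᶠ z in nhds x, z ∉ X → H z
  let A' : M → Prop := fun x => ∀ᶠ z in nhds x, z ∉ X → ¬ H z
  have hcover : ∀ x ∈ B, x ≠ p → A x ∨ A' x := by
    intro x hx hxp
    by_cases hxX : x ∈ X
    · obtain ⟨ψ, hψ, hψr⟩ := L.box x (hBr hx) hxp B (hBo.mem_nhds hx)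
      have hψX : ∀ a, ψ a ∈ X ↔ a.2 = 0 := by
        intro a
        have hxB := hΘB (hBΘ hx)
        have haB := hΘB (hBΘ (hψr (mem_range_self a)))
        have h1 : U (ψ 0) (ψ a) ↔ (0 : ℝ × (Fin m → ℝ)).2 = a.2 := hψ.2.2.2.2 _ _
        rw [hψ.2.2.1] at h1
        constructor
        · intro h2
          exact (h1.mp (L.Utrans _ hxB _ hpcl _ haB (L.Usymm _ _ hxX) h2)).symm
        · intro h2
          exact L.Utrans _ hpcl _ hxB _ haB hxX (h1.mpr h2.symm)
      have hY : IsPreconnected ((univ : Set ℝ) ×ˢ ({0}ᶜ : Set (Fin m → ℝ))) := by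
        apply isPreconnected_univ.prod
        apply (isConnected_compl_singleton_of_one_lt_rank _ _).isPreconnected
        rw [← Module.finrank_eq_rank]
        simp; omega
      have hconst := prec_const hY (fun a => H (ψ a)) (by
        intro a ha
        have hz := hloc (ψ a) (hψr (mem_range_self a)) (fun h => ha.2 ((hψX a).mp h))
        rw [box_eventually hψ, box_eventually hψ] at hz
        exact hz.imp (fun h => h.filter_mono nhdsWithin_le_nhds) (fun h => h.filter_mono nhdsWithin_le_nhds))
      have hnb : range ψ ∈ nhds x := hψ.oe.isOpen_range.mem_nhds ⟨0, hψ.2.2.1⟩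
      by_cases hex : ∃ a ∈ (univ : Set ℝ) ×ˢ ({0}ᶜ : Set (Fin m → ℝ)), H (ψ a)
      · left
        obtain ⟨a, ha, hHa⟩ := hex
        filter_upwards [hnb]
        rintro _ ⟨b, rfl⟩ hb
        exact hconst a ha b ⟨trivial, fun h => hb ((hψX b).mpr h)⟩ hHa
      · right
        push Not at hex
        filter_upwards [hnb]
        rintro _ ⟨b, rfl⟩ hb
        exact hex b ⟨trivial, fun h => hb ((hψX b).mpr h)⟩
    · rcases hloc x hx hxX with h | h
      · left; filter_upwards [h] with z hz _ using hz
      · right; filter_upwards [h] with z hz _ using hz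
  have hdisj : ∀ x ∈ B, x ≠ p → A x → A' x → False := by
    intro x hx hxp h1 h2
    obtain ⟨z, hz, -, hzX⟩ := hdenseX x hx hxp _ (h1.and h2)
    exact hz.2 hzX (hz.1 hzX)
  have hz0p : z0 ≠ p := by rintro rfl; exact hz0X (L.Urefl _)
  have hAall : ∀ x ∈ B, x ≠ p → A x := by
    intro x hx hxp
    refine prec_const hBc A ?_ z0 ⟨hz0B, hz0p⟩ x ⟨hx, hxp⟩ ?_
    · rintro y ⟨hy, hyp⟩
      rcases hcover y hy hyp with h | h
      · left
        exact (eventually_eventually_nhds.mpr h).filter_mono nhdsWithin_le_nhds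
      · right
        filter_upwards [(eventually_eventually_nhds.mpr h).filter_mono nhdsWithin_le_nhds,
          self_mem_nhdsWithin] with y' h1 h2 h3
        exact hdisj y' h2.1 h2.2 h3 h1
    · rcases hcover z0 hz0B hz0p with h | h
      · exact h
      · exact absurd hHz0 (h.self_of_nhds hz0X)
  have hHp : ∀ z ∈ B, z ≠ p → H z := by
    intro z hz hzp
    have hcl : z ∈ closure {z | H z} := by
      rw [mem_closure_iff_nhds]
      intro O hO
      obtain ⟨z', h1, h2, h3⟩ := hdenseX z hz hzp O hO
      exact ⟨z', h1, (hAall z' h2 (by rintro rfl; exact h3 (L.Urefl _))).self_of_nhds h3⟩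
    rwa [hHcl.closure_eq] at hcl
  refine ⟨q, hqr.1, hqr.2, hpq, ?_⟩
  filter_upwards [hBo.mem_nhds hpB] with z hz
  by_cases hzp : z = p
  · exact ⟨q, hqB, L.Srefl q, hzp ▸ hpq⟩
  · obtain ⟨K, _, _, h3, y, h4, h5⟩ := hHp z hz hzp
    exact ⟨y, hΘB (h3 y h4).1, h5, (h3 y h4).2⟩

lemma cont_of_rel {X Y : Type*} [TopologicalSpace X] [TopologicalSpace Y] {s : Set X} {C : Set Y}
    (hC : IsCompact C) {R : Set (X × Y)} (hR : IsClosed R) (g : X → Y) (hgC : ∀ x ∈ s, g x ∈ C)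
    (hgR : ∀ x ∈ s, (x, g x) ∈ R) (hu : ∀ x ∈ s, ∀ y ∈ C, (x, y) ∈ R → y = g x) :
    ContinuousOn g s := by
  intro x hx
  rw [ContinuousWithinAt, Filter.tendsto_iff_ultrafilter]
  intro F hF
  have hFs : s ∈ F := by
    have : s ∈ nhdsWithin x s := self_mem_nhdsWithin
    exact hF this
  have hFx : (F : Filter X) ≤ nhds x := hF.trans nhdsWithin_le_nhds
  obtain ⟨y, hyC, hy⟩ := hC.ultrafilter_le_nhds (F.map g) (by
    rw [Filter.le_principal_iff]
    show g ⁻¹' C ∈ F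
    exact Filter.mem_of_superset hFs hgC)
  have hy' : Filter.Tendsto g F (nhds y) := hy
  have h1 : Filter.Tendsto (fun x' => (x', g x')) F (nhds (x, y)) := by
    rw [nhds_prod_eq]
    exact Filter.Tendsto.prodMk (Filter.tendsto_id'.mpr hFx) hy'
  have h2 : (x, y) ∈ R := hR.mem_of_tendsto h1 (Filter.mem_of_superset hFs hgR)
  rw [← hu x hx y hyC h2]
  exact hy'

lemma S_thin {m : ℕ} {S U : M → M → Prop} {p : M} {r0 : ℝ} {D : Set M}
    (L : LocSet S U m p r0 D) {x : M} (hx : x ∈ ball p r0) (hxp : x ≠ p) :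
    ¬ ∀ᶠ z in nhds x, S p z := by
  intro h
  obtain ⟨φ, hφ, hr⟩ := L.box x hx hxp _ (Filter.inter_mem h (isOpen_ball.mem_nhds hx))
  have hb : ∀ a, φ a ∈ closedBall p r0 := fun a => ball_subset_closedBall (hr (mem_range_self a)).2
  have h1 : S (φ 0) (φ (1, 0)) := L.Strans _ (hb _) p (mem_closedBall_self L.pos.le) _ (hb _)
    (L.Ssymm _ _ (hr (mem_range_self _)).1) (hr (mem_range_self _)).1
  rw [hφ.2.2.2.1] at h1
  simp at h1

lemma not_isolated {m : ℕ} [ChartedSpace (EuclideanSpace ℝ (Fin (m+1))) M] (p : M) {B : Set M}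
    (hB : IsOpen B) (hp : p ∈ B) : ∃ x ∈ B, x ≠ p := by
  by_contra hcon
  push Not at hcon
  have h1 : B = {p} := Subset.antisymm hcon (singleton_subset_iff.mpr hp)
  have h2 : IsOpen ({p} : Set M) := h1 ▸ hB
  let e := chartAt (EuclideanSpace ℝ (Fin (m+1))) p
  have h3 := e.isOpen_image_of_subset_source h2 (singleton_subset_iff.mpr (mem_chart_source _ p))
  rw [image_singleton] at h3
  exact not_isOpen_singleton (e p) h3

lemma stepB [CompactSpace M] {m : ℕ} (hm : 1 ≤ m) [ChartedSpace (EuclideanSpace ℝ (Fin (m+1))) M]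
    {S U : M → M → Prop} {p : M} {r0 : ℝ} {D : Set M} (L : LocSet S U m p r0 D)
    {q : M} (hq : q ∈ ball p r0) (hqp : q ≠ p) (hpq : U p q)
    (hev : ∀ᶠ z in nhds p, ∃ x ∈ closedBall p r0, S q x ∧ U z x) :
    ∃ φ, IsBox S U m p φ := by
  have hr0 := L.pos
  have hpB : p ∈ closedBall p r0 := mem_closedBall_self hr0.le
  have hqB := ball_subset_closedBall hq
  obtain ⟨φq, hφq, hφqr⟩ := L.box q hq hqp _ (isOpen_ball.mem_nhds hq)
  let κ : (Fin m → ℝ) → M := fun y => φq (0, y)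
  have hκc : Continuous κ := hφq.1.comp (by fun_prop)
  have hκB : ∀ y, κ y ∈ closedBall p r0 := fun y => ball_subset_closedBall (hφqr (mem_range_self _))
  have hκU : ∀ y y', U (κ y) (κ y') ↔ y = y' := fun y y' => hφq.2.2.2.2 _ _
  have hκ0 : κ 0 = q := hφq.2.2.1
  -- U-projection defined near p
  have hev2 : ∀ᶠ z in nhds p, ∃ v, ‖v‖ ≤ 1 ∧ U z (κ v) := by
    let C : Set M := {x | x ∈ closedBall p r0 ∧ S q x} \ φq '' ball 0 1
    have hCc : IsCompact C := by
      apply IsClosed.isCompact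
      refine IsClosed.sdiff (isClosed_closedBall.inter ?_) (hφq.oe.isOpenMap _ isOpen_ball)
      exact L.Scl.preimage (f := fun x => (q, x)) (by fun_prop)
    have h1 : ∀ᶠ z in nhds p, ∀ x ∈ C, ¬ U z x := by
      apply hCc.eventually_forall_of_forall_eventually (P := fun z x => ¬ U z x)
      rintro x ⟨⟨hxB, hqx⟩, hxn⟩
      apply L.Ucl.isOpen_compl.mem_nhds
      intro hpx
      have h2 : U q x := L.Utrans _ hqB _ hpB _ hxB (L.Usymm _ _ hpq) hpx
      have h3 := L.SU _ _ hqx h2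
      apply hxn
      rw [← h3]
      exact ⟨0, by simp, hφq.2.2.1⟩
    filter_upwards [h1, hev] with z hz1 ⟨x, hxB, hqx, hzx⟩
    have hx : x ∈ φq '' ball 0 1 := by
      by_contra h
      exact hz1 x ⟨⟨hxB, hqx⟩, h⟩ hzx
    obtain ⟨⟨t, v⟩, hv, rfl⟩ := hx
    rw [← hφq.2.2.1, hφq.2.2.2.1] at hqx
    have ht : t = 0 := hqx.symm
    subst ht
    rw [mem_ball_zero_iff, Prod.norm_def, max_lt_iff] at hv
    exact ⟨v, hv.2.le, hzx⟩
  obtain ⟨r2', hr2', hr2h⟩ := Metric.eventually_nhds_iff_ball.mp hev2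
  obtain ⟨r2, hr2, hr2a, hr2b⟩ : ∃ r2 > 0, r2 < r2' ∧ r2 < r0 :=
    ⟨min r2' r0 / 2, by positivity, by have := min_le_left r2' r0; have : 0 < min r2' r0 := by positivity
                                       linarith,
      by have := min_le_right r2' r0; have : 0 < min r2' r0 := by positivity
         linarith⟩
  have hBB : ∀ z ∈ closedBall p r2, z ∈ closedBall p r0 := fun z hz => closedBall_subset_closedBall hr2b.le hz
  have hbB : ∀ z ∈ ball p r2, z ∈ closedBall p r2 := fun z hz => ball_subset_closedBall hz
  have hπ : ∀ z : M, ∃ v, z ∈ closedBall p r2 → ‖v‖ ≤ 1 ∧ U z (κ v) := by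
    intro z
    by_cases hz : z ∈ closedBall p r2
    · obtain ⟨v, hv⟩ := hr2h z (closedBall_subset_ball hr2a hz)
      exact ⟨v, fun _ => hv⟩
    · exact ⟨0, fun h => absurd h hz⟩
  choose π hπ using hπ
  have hπu : ∀ z ∈ closedBall p r2, ∀ v, U z (κ v) → v = π z := by
    intro z hz v hv
    rw [← hκU]
    exact L.Utrans _ (hκB _) z (hBB z hz) _ (hκB _) (L.Usymm _ _ hv) (hπ z hz).2
  have hπc : ContinuousOn π (closedBall p r2) := by
    refine cont_of_rel (isCompact_closedBall (0 : Fin m → ℝ) 1)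
      (R := {a : M × (Fin m → ℝ) | U a.1 (κ a.2)}) ?_ π ?_ ?_ ?_
    · exact L.Ucl.preimage (f := fun a : M × (Fin m → ℝ) => (a.1, κ a.2)) (by fun_prop)
    · intro z hz; rw [mem_closedBall_zero_iff]; exact (hπ z hz).1
    · intro z hz; exact (hπ z hz).2
    · intro z hz v _ hv; exact hπu z hz v hv
  have hp2 : p ∈ closedBall p r2 := mem_closedBall_self hr2.le
  have hπp : π p = 0 := (hπu p hp2 0 (by rw [hκ0]; exact hpq)).symm
  -- the relation defining β
  let R : Set ((M × (Fin m → ℝ)) × M) := {a | S a.1.1 a.2 ∧ U a.2 (κ a.1.2)}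
  have hR : IsClosed R := by
    apply IsClosed.inter
    · exact L.Scl.preimage (f := fun a : (M × (Fin m → ℝ)) × M => (a.1.1, a.2)) (by fun_prop)
    · exact L.Ucl.preimage (f := fun a : (M × (Fin m → ℝ)) × M => (a.2, κ a.1.2)) (by fun_prop)
  have hRu : ∀ w ∈ closedBall p r2, ∀ y v v', v ∈ closedBall p r2 → v' ∈ closedBall p r2 →
      ((w, y), v) ∈ R → ((w, y), v') ∈ R → v = v' := by
    intro w hw y v v' hv hv' h h'
    apply L.SU
    · exact L.Strans _ (hBB _ hv) _ (hBB _ hw) _ (hBB _ hv') (L.Ssymm _ _ h.1) h'.1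
    · exact L.Utrans _ (hBB _ hv) _ (hκB y) _ (hBB _ hv') h.2 (L.Usymm _ _ h'.2)
  have hRp : ((p, 0), p) ∈ R := ⟨L.Srefl p, by show U p (κ 0); rw [hκ0]; exact hpq⟩
  have hC1 : ∀ᶠ a : M × (Fin m → ℝ) in nhds (p, 0), ∀ v ∈ sphere p r2, (a, v) ∉ R := by
    have hsc : IsCompact (sphere p r2) := isClosed_sphere.isCompact
    apply hsc.eventually_forall_of_forall_eventually (P := fun a v => (a, v) ∉ R)
    intro v hv
    apply hR.isOpen_compl.mem_nhds
    intro hvR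
    have := hRu p hp2 0 v p (sphere_subset_closedBall hv) hp2 hvR hRp
    rw [this] at hv
    simp at hv
    linarith
  obtain ⟨s, hs, hsh⟩ := Metric.eventually_nhds_iff_ball.mp hC1
  have hC2 : ∀ᶠ w in nhds p, w ∈ ball p r2 ∧ w ∈ ball p s ∧ π w ∈ ball (0 : Fin m → ℝ) s := by
    have hA : ∀ᶠ w in nhds p, w ∈ ball p r2 := ball_mem_nhds p hr2
    have hB : ∀ᶠ w in nhds p, w ∈ ball p s := ball_mem_nhds p hs
    refine hA.and (hB.and ?_)
    apply hπc.continuousAt (closedBall_mem_nhds p hr2)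
    rw [hπp]; exact ball_mem_nhds _ hs
  obtain ⟨r3, hr3, hr3h⟩ := Metric.eventually_nhds_iff_ball.mp hC2
  have hw2 : ∀ w ∈ ball p r3, w ∈ closedBall p r2 := fun w hw => hbB _ (hr3h w hw).1
  have hsm : ∀ w ∈ ball p r3, ∀ y ∈ ball (0 : Fin m → ℝ) s, ∀ v ∈ closedBall p r2,
      ((w, y), v) ∈ R → v ∈ ball p r2 := by
    intro w hw y hy v hv hR'
    rcases (mem_closedBall.mp hv).lt_or_eq with h | h
    · exact h
    · exfalso
      refine hsh (w, y) ?_ v h hR'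
      rw [mem_ball, Prod.dist_eq, max_lt_iff]
      exact ⟨(hr3h w hw).2.1, hy⟩
  -- existence
  let E : Set (M × (Fin m → ℝ)) := {a | ∃ v ∈ closedBall p r2, (a, v) ∈ R}
  have hE : IsClosed E := by
    have h1 : E = Prod.fst '' (R ∩ (univ ×ˢ closedBall p r2)) := by
      ext a
      constructor
      · rintro ⟨v, hv, hav⟩; exact ⟨(a, v), ⟨hav, trivial, hv⟩, rfl⟩
      · rintro ⟨⟨a', v⟩, ⟨h1, -, h2⟩, rfl⟩; exact ⟨v, h2, h1⟩
    have h2 : E = Prod.fst '' R ∩ E := by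
      rw [eq_comm, inter_eq_right, h1]; exact image_mono inter_subset_left
    rw [h1]
    exact isClosedMap_fst_of_compactSpace _ (hR.inter (isClosed_univ.prod isClosed_closedBall))
  have hex1 : ∀ w ∈ ball p r3, ¬ S p w → ∀ y ∈ ball (0 : Fin m → ℝ) s, (w, y) ∈ E := by
    intro w hw hpw y hy
    refine prec_const (convex_ball (0 : Fin m → ℝ) s).isPreconnected (fun y => (w, y) ∈ E) ?_
      (π w) (hr3h w hw).2.2 y hy ⟨w, hw2 w hw, L.Srefl w, (hπ w (hw2 w hw)).2⟩
    intro y hy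
    by_cases hyE : (w, y) ∈ E
    · left
      apply Filter.Eventually.filter_mono nhdsWithin_le_nhds
      obtain ⟨v, hv, hvR⟩ := hyE
      have hv2 := hsm w hw y hy v hv hvR
      have hvp : v ≠ p := by rintro rfl; exact hpw (L.Ssymm _ _ hvR.1)
      obtain ⟨φ, hφ, hφr⟩ := L.box v (ball_subset_ball hr2b.le hv2) hvp _ (isOpen_ball.mem_nhds hv2)
      have hφ2 : ∀ a, φ a ∈ closedBall p r2 := fun a => hbB _ (hφr (mem_range_self a))
      have hθc : Continuous fun y' : Fin m → ℝ => π (φ (0, y')) :=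
        hπc.comp_continuous (hφ.1.comp (by fun_prop)) (fun y' => hφ2 _)
      have hθi : Function.Injective fun y' : Fin m → ℝ => π (φ (0, y')) := by
        intro y1 y2 h12
        simp only at h12
        have h1 := (hπ _ (hφ2 (0, y1))).2
        have h2 := (hπ _ (hφ2 (0, y2))).2
        rw [← h12] at h2
        have h3 := L.Utrans _ (hBB _ (hφ2 (0, y1))) _ (hκB _) _ (hBB _ (hφ2 (0, y2))) h1 (L.Usymm _ _ h2)
        rw [hφ.2.2.2.2] at h3
        exact h3
      have hopen := ID_findim (U := univ) rfl isOpen_univ _ hθc.continuousOn hθi.injOn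
      have hφ0 : φ (0, 0) = v := hφ.2.2.1
      refine Filter.mem_of_superset (hopen.mem_nhds ⟨0, trivial, ?_⟩) ?_
      · show π (φ (0, 0)) = y
        rw [hφ0]
        exact (hπu v hv y hvR.2).symm
      · rintro _ ⟨y', -, rfl⟩
        refine ⟨φ (0, y'), hφ2 _, ?_, (hπ _ (hφ2 _)).2⟩
        have h1 : S v (φ (0, y')) := by rw [← hφ0, hφ.2.2.2.1]
        exact L.Strans _ (hBB _ (hw2 w hw)) _ (hBB _ hv) _ (hBB _ (hφ2 _)) hvR.1 h1
    · right
      apply Filter.Eventually.filter_mono nhdsWithin_le_nhds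
      have hcc : Continuous fun y : Fin m → ℝ => (w, y) := by fun_prop
      exact hcc.continuousAt (hE.isOpen_compl.mem_nhds hyE)
  have hex : ∀ w ∈ ball p r3, ∀ y ∈ ball (0 : Fin m → ℝ) s, (w, y) ∈ E := by
    intro w hw y hy
    have hF : IsClosed {w | (w, y) ∈ E} := hE.preimage (f := fun w => (w, y)) (by fun_prop)
    have hcl : w ∈ closure {w | (w, y) ∈ E} := by
      rw [_root_.mem_closure_iff]
      intro O hO hwO
      by_contra hcon
      have hcon' : ∀ w' ∈ O ∩ ball p r3, S p w' := by
        intro w' hw'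
        by_contra h
        exact hcon ⟨w', hw'.1, hex1 w' hw'.2 h y hy⟩
      have hopen : IsOpen (O ∩ ball p r3) := hO.inter isOpen_ball
      obtain ⟨w1, hw1, hw1p⟩ : ∃ w1 ∈ O ∩ ball p r3, w1 ≠ p := by
        by_cases h : w = p
        · exact not_isolated (m := m) p hopen ⟨h ▸ hwO, mem_ball_self hr3⟩
        · exact ⟨w, ⟨hwO, hw⟩, h⟩
      refine S_thin L (ball_subset_ball hr2b.le (hr3h w1 hw1.2).1) hw1p ?_
      filter_upwards [hopen.mem_nhds hw1] with w' hw' using hcon' w' hw'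
    rwa [hF.closure_eq] at hcl
  -- β
  have hβ : ∀ a : M × (Fin m → ℝ), ∃ v, a ∈ E → v ∈ closedBall p r2 ∧ (a, v) ∈ R := by
    intro a
    by_cases ha : a ∈ E
    · obtain ⟨v, hv⟩ := ha
      exact ⟨v, fun _ => hv⟩
    · exact ⟨p, fun h => absurd h ha⟩
  choose β hβ using hβ
  let N : Set (M × (Fin m → ℝ)) := ball p r3 ×ˢ ball 0 s
  have hN : ∀ a ∈ N, β a ∈ closedBall p r2 ∧ (a, β a) ∈ R := fun a ha => hβ a (hex a.1 ha.1 a.2 ha.2)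
  have hβc : ContinuousOn β N := by
    refine cont_of_rel (isClosed_closedBall (x := p) (ε := r2)).isCompact hR β (fun a ha => (hN a ha).1)
      (fun a ha => (hN a ha).2) ?_
    rintro ⟨w, y⟩ ha v hv hvR
    exact hRu w (hw2 w ha.1) y _ _ hv (hN _ ha).1 hvR (hN _ ha).2
  have hp0N : (p, (0 : Fin m → ℝ)) ∈ N := ⟨mem_ball_self hr3, mem_ball_self hs⟩
  have hβp : β (p, 0) = p := hRu p hp2 0 _ _ (hN _ hp0N).1 hp2 (hN _ hp0N).2 hRp
  have hNo : IsOpen N := isOpen_ball.prod isOpen_ball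
  -- choose y0
  obtain ⟨y0, hy0s, hy0b, hy00⟩ : ∃ y0 : Fin m → ℝ, (p, y0) ∈ N ∧ β (p, y0) ∈ ball p r3 ∧ y0 ≠ 0 := by
    have h1 : ∀ᶠ a in nhds (p, (0 : Fin m → ℝ)), a ∈ N ∧ β a ∈ ball p r3 := by
      have hA : ∀ᶠ a in nhds (p, (0 : Fin m → ℝ)), a ∈ N := hNo.mem_nhds hp0N
      refine hA.and ?_
      apply hβc.continuousAt (hNo.mem_nhds hp0N)
      rw [hβp]; exact ball_mem_nhds p hr3
    have hcc : Continuous fun t : ℝ => ((p, fun _ => t) : M × (Fin m → ℝ)) := by fun_prop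
    have h2 := (hcc.tendsto' 0 (p, 0) rfl).eventually h1
    obtain ⟨e, he, h3⟩ := Metric.eventually_nhds_iff_ball.mp h2
    have h4 := h3 (e / 2) (by rw [mem_ball_zero_iff, Real.norm_of_nonneg (by positivity)]; linarith)
    refine ⟨fun _ => e / 2, h4.1, h4.2, fun h => ?_⟩
    have := congrFun h ⟨0, hm⟩
    simp at this
    linarith
  obtain ⟨v0, hv0⟩ : ∃ v0, v0 = β (p, y0) := ⟨_, rfl⟩
  rw [← hv0] at hy0b
  have hv0R := (hN _ hy0s).2
  rw [← hv0] at hv0R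
  have hv0p : v0 ≠ p := by
    intro h
    apply hy00
    rw [h] at hv0R
    rw [hπu p hp2 y0 hv0R.2, hπp]
  obtain ⟨ψ, hψ, hψr⟩ := L.box v0 (ball_subset_ball hr2b.le (hr3h v0 hy0b).1) hv0p _
    (isOpen_ball.mem_nhds hy0b)
  let ι : ℝ × (Fin m → ℝ) → M × (Fin m → ℝ) := fun a => (ψ (a.1, 0), fun j => sqz s (a.2 j))
  have hιc : Continuous ι := by
    have h1 := sqz_cont s
    have h2 := hψ.1
    fun_prop
  have hιN : ∀ a, ι a ∈ N := by
    intro a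
    refine ⟨hψr (mem_range_self _), ?_⟩
    rw [mem_ball_zero_iff, pi_norm_lt_iff hs]
    intro j
    exact sqz_lt hs _
  have hS : ∀ a b, S (β (ι a)) (β (ι b)) ↔ a.1 = b.1 := by
    intro a b
    have hA := hN _ (hιN a)
    have hB' := hN _ (hιN b)
    have ha2 := hBB _ (hw2 _ (hιN a).1)
    have hb2 := hBB _ (hw2 _ (hιN b).1)
    have h1 : S (ι a).1 (ι b).1 ↔ a.1 = b.1 := hψ.2.2.2.1 _ _
    rw [← h1]
    constructor
    · intro h
      exact L.Strans _ ha2 _ (hBB _ hA.1) _ hb2 hA.2.1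
        (L.Strans _ (hBB _ hA.1) _ (hBB _ hB'.1) _ hb2 h (L.Ssymm _ _ hB'.2.1))
    · intro h
      exact L.Strans _ (hBB _ hA.1) _ ha2 _ (hBB _ hB'.1) (L.Ssymm _ _ hA.2.1)
        (L.Strans _ ha2 _ hb2 _ (hBB _ hB'.1) h hB'.2.1)
  have hU : ∀ a b, U (β (ι a)) (β (ι b)) ↔ a.2 = b.2 := by
    intro a b
    have hA := hN _ (hιN a)
    have hB' := hN _ (hιN b)
    have h1 : U (κ (ι a).2) (κ (ι b).2) ↔ a.2 = b.2 := by
      rw [hκU]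
      constructor
      · intro h
        ext j
        exact sqz_inj hs (congrFun h j)
      · intro h
        simp only [ι, h]
    rw [← h1]
    constructor
    · intro h
      exact L.Utrans _ (hκB _) _ (hBB _ hA.1) _ (hκB _) (L.Usymm _ _ hA.2.2)
        (L.Utrans _ (hBB _ hA.1) _ (hBB _ hB'.1) _ (hκB _) h hB'.2.2)
    · intro h
      exact L.Utrans _ (hBB _ hA.1) _ (hκB _) _ (hBB _ hB'.1) hA.2.2
        (L.Utrans _ (hκB _) _ (hκB _) _ (hBB _ hB'.1) h (L.Usymm _ _ hB'.2.2))
  refine ⟨fun a => β (ι a), hβc.comp_continuous hιc hιN, ?_, ?_, hS, hU⟩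
  · intro a b hab
    simp only at hab
    have h1 := (hS a b).mp (by rw [hab]; exact L.Srefl _)
    have h2 := (hU a b).mp (by rw [hab]; exact L.Urefl _)
    exact Prod.ext h1 h2
  · have h0 : ι 0 = (v0, 0) := by
      have h1 : ψ (0, 0) = v0 := hψ.2.2.1
      ext1
      · exact h1
      · ext j; simp [ι, sqz_zero]
    have h1 := hN _ (hιN 0)
    rw [h0] at h1
    show β (ι 0) = p
    rw [h0]
    refine hRu v0 (hw2 _ hy0b) 0 _ _ h1.1 hp2 h1.2 ⟨L.Ssymm _ _ hv0R.1, ?_⟩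
    show U p (κ 0)
    rw [hκ0]; exact hpq

lemma LPS_of_box {m : ℕ} [ChartedSpace (EuclideanSpace ℝ (Fin (m+1))) M]
    (f : M ≃ₜ M) {α : ℝ} (hα : 0 < α) {p : M} {φ : ℝ × (Fin m → ℝ) → M}
    (hφ : IsBox (fun x y => y ∈ WsLoc f α x) (fun x y => y ∈ WsLoc f.symm α x) m p φ) :
    AdmitsLPS f (m+1) p := by
  let e : (Fin 1 → ℝ) × (Fin m → ℝ) ≃ₜ ℝ × (Fin m → ℝ) :=
    (Homeomorph.funUnique (Fin 1) ℝ).prodCongr (Homeomorph.refl _)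
  have he : ∀ a b : (Fin 1 → ℝ) × (Fin m → ℝ), (e a).1 = (e b).1 ↔ a.1 = b.1 := fun a b =>
    (Homeomorph.funUnique (Fin 1) ℝ).injective.eq_iff
  refine ⟨1, fun a : (Fin 1 → ℝ) × (Fin m → ℝ) => φ (e a), α, hα,
    hφ.oe.isEmbedding.comp e.isEmbedding, ?_, ?_⟩
  · exact ⟨e.symm 0, by simp [hφ.2.2.1]⟩
  · intro x y
    constructor
    · ext z
      constructor
      · rintro ⟨⟨a, b⟩, ⟨h1, -⟩, rfl⟩
        refine ⟨(hφ.2.2.2.1 _ _).mpr ((he _ _).mpr ?_), mem_range_self _⟩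
        exact (mem_singleton_iff.mp h1).symm
      · rintro ⟨h1, ⟨a, rfl⟩⟩
        have h2 := (he _ _).mp ((hφ.2.2.2.1 _ _).mp h1)
        exact ⟨a, ⟨h2.symm, trivial⟩, rfl⟩
    · rw [WuLoc_eq]
      ext z
      constructor
      · rintro ⟨⟨a, b⟩, ⟨-, h1⟩, rfl⟩
        refine ⟨(hφ.2.2.2.2 _ _).mpr ?_, mem_range_self _⟩
        exact (mem_singleton_iff.mp h1).symm
      · rintro ⟨h1, ⟨a, rfl⟩⟩
        have h2 := (hφ.2.2.2.2 _ _).mp h1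
        exact ⟨a, ⟨trivial, h2.symm⟩, rfl⟩

/-- **Lemma (no isolated singularities).** If `dim M = n ≥ 3` and `Per_H^{n-1}` is dense,
then the set of singularities of an expansive homeomorphism `f` has no isolated points. -/
theorem stmt19 {M : Type*} [MetricSpace M] [CompactSpace M] [ConnectedSpace M]
    (n : ℕ) [ChartedSpace (EuclideanSpace ℝ (Fin n)) M] (hn : 3 ≤ n)
    (f : M ≃ₜ M) (α : ℝ) (hα : 0 < α) (hexp : IsExpansive f α)
    (hdense : closure (PerHr f n (n - 1)) = Set.univ) :
    ∀ p : M, ¬ AdmitsLPS f n p →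
      p ∈ closure ({q : M | ¬ AdmitsLPS f n q} \ {p}) := by
  intro p hp
  by_contra hcl
  obtain ⟨m, rfl⟩ : ∃ m, n = m + 1 := ⟨n - 1, by omega⟩
  have hD : Dense (PerHr f (m+1) m) := dense_iff_closure_eq.mpr hdense
  have hO : (closure ({q : M | ¬ AdmitsLPS f (m+1) q} \ {p}))ᶜ ∈ nhds p :=
    isClosed_closure.isOpen_compl.mem_nhds hcl
  obtain ⟨r0, L⟩ := exists_locset hα hexp hD hO (by
    intro x hx hxp
    by_contra h
    exact hx (subset_closure ⟨h, hxp⟩))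
  obtain ⟨q, hq, hqp, hpq, hev⟩ := stepA (by omega) L
  obtain ⟨φ, hφ⟩ := stepB (by omega) L hq hqp hpq hev
  exact hp (LPS_of_box f hα hφ)
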